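/- arXiv:2403.09337 — 3 statements merged into one kernel-verified Lean document; each statement's English description precedes it below -/
import Mathlib

section
/- Let L be a finite-dimensional semisimple Lie algebra over the complex numbers, U(L) its universal enveloping algebra, and Z(U(L)) the center of U(L). Let I be a two-sided ideal of U(L) with I ≠ U(L) such that the quotient U(L)/I is finite-dimensional over ℂ and I ∩ Z(U(L)) is a maximal ideal of the commutative ring Z(U(L)). Then I is a maximal two-sided ideal of U(L). -/
section Aux

open LieModule LieAlgebra Module

theorem aux_perfect (L : Type*) [LieRing L] [LieAlgebra ℂ L] [FiniteDimensional ℂ L]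
    [LieAlgebra.IsSemisimple ℂ L] : ⁅(⊤ : LieIdeal ℂ L), (⊤ : LieIdeal ℂ L)⁆ = ⊤ := by
  have h := LieIdeal.isCompl_killingCompl (⁅(⊤ : LieIdeal ℂ L), (⊤ : LieIdeal ℂ L)⁆)
  suffices hb : LieIdeal.killingCompl ℂ L ⁅(⊤ : LieIdeal ℂ L), (⊤ : LieIdeal ℂ L)⁆ = ⊥ by
    rw [hb] at h
    exact eq_top_of_isCompl_bot h
  rw [eq_bot_iff]
  intro x hx
  rw [LieIdeal.mem_killingCompl] at hx
  have h1 : ∀ y : L, ⁅x, y⁆ = 0 := by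
    intro y
    refine (IsKilling.killingForm_nondegenerate ℂ L).1 _ fun z => ?_
    have := hx ⁅y, z⁆ (LieSubmodule.lie_mem_lie trivial trivial)
    rw [killingForm, LieModule.traceForm_apply_lie_apply, LieModule.traceForm_comm]
    exact this
  have h2 : x ∈ (LieAlgebra.center ℂ L) := by
    rw [LieModule.mem_maxTrivSubmodule]
    intro y
    rw [← lie_skew, h1, neg_zero]
  simpa using h2

theorem aux_trivial (L : Type*) [LieRing L] [LieAlgebra ℂ L] [FiniteDimensional ℂ L]
    [LieAlgebra.IsSemisimple ℂ L] (M : Type*) [AddCommGroup M] [Module ℂ M] [LieRingModule L M]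
    [LieModule ℂ L M] [FiniteDimensional ℂ M] (h : traceForm ℂ L M = 0) (x : L) (m : M) :
    ⁅x, m⁆ = 0 := by
  have hp := aux_perfect L
  have hD : derivedSeries ℂ L 1 = ⊤ := by
    rw [derivedSeries_def, derivedSeriesOfIdeal_succ, derivedSeriesOfIdeal_zero, hp]
  have hn := LieModule.isNilpotent_derivedSeries_of_traceForm_eq_zero h
  have hL : LieModule.IsNilpotent L M := by
    rw [LieModule.isNilpotent_iff_forall' (R := ℂ)] at hn ⊢
    intro x
    exact hn ⟨x, by rw [hD]; trivial⟩
  obtain ⟨k, hk⟩ := (LieModule.isNilpotent_iff ℂ L M).1 hL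
  have key : ∀ k, ∀ x : L, ∀ m : M, ⁅x, m⁆ ∈ lowerCentralSeries ℂ L M k := by
    intro k
    induction k with
    | zero => intro x m; simp
    | succ k ih =>
      intro x m
      have hx : x ∈ ⁅(⊤ : LieIdeal ℂ L), (⊤ : LieIdeal ℂ L)⁆ := by rw [hp]; trivial
      rw [← LieSubmodule.mem_toSubmodule, LieSubmodule.lieIdeal_oper_eq_linear_span] at hx
      induction hx using Submodule.span_induction with
      | mem x hx =>
        obtain ⟨y, z, rfl⟩ := hx
        rw [lowerCentralSeries_succ]
        have : ⁅⁅(y : L), (z : L)⁆, m⁆ = ⁅(y : L), ⁅(z : L), m⁆⁆ - ⁅(z : L), ⁅(y : L), m⁆⁆ := by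
          rw [lie_lie]
        exact this ▸ sub_mem (LieSubmodule.lie_mem_lie trivial (ih _ _))
          (LieSubmodule.lie_mem_lie trivial (ih _ _))
      | zero => simp
      | add x y _ _ h1 h2 => rw [add_lie]; exact add_mem h1 h2
      | smul a x _ h1 => rw [smul_lie]; exact Submodule.smul_mem _ _ h1
  have := key k x m
  rw [hk] at this
  simpa using this

theorem aux_casimir (L : Type*) [LieRing L] [LieAlgebra ℂ L] [FiniteDimensional ℂ L]
    [LieAlgebra.IsSemisimple ℂ L] (M : Type*) [AddCommGroup M] [Module ℂ M] [LieRingModule L M]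
    [LieModule ℂ L M] [FiniteDimensional ℂ M] (h : traceForm ℂ L M ≠ 0) :
    ∃ C : Module.End ℂ M, (∀ (x : L) m, C ⁅x, m⁆ = ⁅x, C m⁆) ∧
      (∀ W : LieSubmodule ℂ L M, (∀ (x : L) (m : M), ⁅x, m⁆ ∈ W) → ∀ m, C m ∈ W) ∧
      LinearMap.trace ℂ M C ≠ 0 := by
  classical
  set t := traceForm ℂ L M with ht
  have tinv : ∀ z x y : L, t ⁅z, x⁆ y = - t x ⁅z, y⁆ := by
    intro z x y
    rw [ht, ← lie_skew, map_neg, LinearMap.neg_apply, traceForm_apply_lie_apply]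
  let K : LieIdeal ℂ L := 
    { LinearMap.ker t with
      lie_mem := by
        intro z x hx
        change t x = 0 at hx
        change t ⁅z, x⁆ = 0
        ext y
        rw [tinv, hx]; simp }
  have hK : ∀ x, x ∈ K ↔ t x = 0 := fun x => Iff.rfl
  set J : LieIdeal ℂ L := K.killingCompl with hJ
  have hc : IsCompl K J := LieIdeal.isCompl_killingCompl K
  have hc' : IsCompl K.toSubmodule J.toSubmodule := (LieSubmodule.isCompl_toSubmodule).2 hc
  let B : LinearMap.BilinForm ℂ J := t.domRestrict₁₂ J.toSubmodule J.toSubmodule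
  have hBa : ∀ x y : J, B x y = t x y := fun x y => rfl
  have hsym : B.IsSymm := ⟨fun x y => traceForm_comm ℂ L M _ _⟩
  have hz : ∀ x : J, (∀ y : J, t x y = 0) → x = 0 := by
    intro x hx
    have : t x = 0 := by
      ext y
      have hy : y ∈ K.toSubmodule ⊔ J.toSubmodule := by rw [hc'.sup_eq_top]; trivial
      obtain ⟨a, ha, b, hb, rfl⟩ := Submodule.mem_sup.1 hy
      rw [map_add, hx ⟨b, hb⟩, ht, traceForm_comm, ← ht, (hK a).1 ha]; simp
    have h2 : (x : L) ∈ K.toSubmodule ⊓ J.toSubmodule := ⟨(hK _).2 this, x.2⟩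
    rw [hc'.inf_eq_bot] at h2
    exact Subtype.ext ((Submodule.mem_bot _).1 h2)
  have hnd : B.Nondegenerate := by
    constructor
    · intro x hx; exact hz x hx
    · intro x hx; exact hz x (fun y => by rw [ht, traceForm_comm]; exact hx y)
  have hJ0 : finrank ℂ J ≠ 0 := by
    intro h0
    have hs : Subsingleton J := Module.finrank_zero_iff.1 h0
    apply h
    ext x y
    have hy : x ∈ K.toSubmodule ⊔ J.toSubmodule := by rw [hc'.sup_eq_top]; trivial
    obtain ⟨a, ha, b, hb, rfl⟩ := Submodule.mem_sup.1 hy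
    have hb0 : b = 0 := congrArg Subtype.val (Subsingleton.elim (⟨b, hb⟩ : J) 0)
    rw [map_add, (hK a).1 ha, hb0]; simp
  let e := Module.finBasis ℂ J
  let f := B.dualBasis hnd e
  have hef : ∀ i j, B (e i) (f j) = if i = j then 1 else 0 :=
    fun i j => LinearMap.BilinForm.apply_dualBasis_right hnd hsym e i j
  have hfr : ∀ x : J, x = ∑ i, B x (e i) • f i := by
    intro x
    conv_lhs => rw [← f.sum_repr x]
    simp [f]
  have her : ∀ x : J, x = ∑ i, B x (f i) • e i := by
    intro x
    have hx := e.sum_repr x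
    have : ∀ i, e.repr x i = B x (f i) := by
      intro i
      have h6 := congrArg (fun y => B y (f i)) hx
      simp only [map_sum, map_smul, LinearMap.sum_apply, LinearMap.smul_apply, hef, smul_eq_mul,
        mul_ite, mul_one, mul_zero, Finset.sum_ite_eq', Finset.mem_univ, if_true] at h6
      exact h6
    exact hx.symm.trans (Finset.sum_congr rfl fun i _ => by rw [this i])
  refine ⟨∑ i, toEnd ℂ L M (e i) * toEnd ℂ L M (f i), ?_, ?_, ?_⟩
  · intro z m
    have h1 : ∀ i, ⁅z, ((e i : J) : L)⁆ = ∑ j, t ⁅z, (e i : L)⁆ (f j) • (e j : L) := by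
      intro i
      have := congrArg Subtype.val (her ⁅z, e i⁆)
      simpa [hBa] using this
    have h2 : ∀ i, ⁅z, ((f i : J) : L)⁆ = ∑ j, t ⁅z, (f i : L)⁆ (e j) • (f j : L) := by
      intro i
      have := congrArg Subtype.val (hfr ⁅z, f i⁆)
      simpa [hBa] using this
    simp only [LinearMap.sum_apply, Module.End.mul_apply, toEnd_apply_apply, lie_sum]
    rw [eq_comm, ← sub_eq_zero, ← Finset.sum_sub_distrib]
    have h3 : ∀ i, ⁅z, ⁅(e i : L), ⁅(f i : L), m⁆⁆⁆ - ⁅(e i : L), ⁅(f i : L), ⁅z, m⁆⁆⁆ =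
        ⁅⁅z, (e i : L)⁆, ⁅(f i : L), m⁆⁆ + ⁅(e i : L), ⁅⁅z, (f i : L)⁆, m⁆⁆ := by
      intro i
      simp only [lie_lie, lie_sub]; abel
    simp_rw [h3]
    have h4 : ∀ i, ⁅⁅z, (e i : L)⁆, ⁅(f i : L), m⁆⁆ =
        ∑ j, t ⁅z, (e i : L)⁆ (f j) • ⁅(e j : L), ⁅(f i : L), m⁆⁆ := by
      intro i
      conv_lhs => rw [h1 i]
      simp only [sum_lie, smul_lie]
    have h5 : ∀ i, ⁅(e i : L), ⁅⁅z, (f i : L)⁆, m⁆⁆ =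
        ∑ j, t ⁅z, (f i : L)⁆ (e j) • ⁅(e i : L), ⁅(f j : L), m⁆⁆ := by
      intro i
      conv_lhs => rw [h2 i]
      simp only [sum_lie, smul_lie, lie_sum, lie_smul]
    simp_rw [h4, h5]
    rw [Finset.sum_add_distrib, Finset.sum_comm, ← Finset.sum_add_distrib]
    refine Finset.sum_eq_zero fun i _ => ?_
    rw [← Finset.sum_add_distrib]
    refine Finset.sum_eq_zero fun j _ => ?_
    rw [← add_smul, tinv, ht, traceForm_comm, neg_add_cancel, zero_smul]
  · intro W hW m
    simp only [LinearMap.sum_apply, Module.End.mul_apply, toEnd_apply_apply]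
    exact sum_mem fun i _ => hW _ _
  · rw [map_sum]
    have : ∀ i, LinearMap.trace ℂ M (toEnd ℂ L M (e i) * toEnd ℂ L M (f i)) = 1 := by
      intro i
      have := hef i i
      rw [if_pos rfl] at this
      exact this
    simp_rw [this]
    simpa using hJ0

theorem aux_H1 (L : Type*) [LieRing L] [LieAlgebra ℂ L] [FiniteDimensional ℂ L]
    [LieAlgebra.IsSemisimple ℂ L] (n : ℕ) : ∀ (M : Type*) [AddCommGroup M] [Module ℂ M]
    [LieRingModule L M] [LieModule ℂ L M] [FiniteDimensional ℂ M] (_ : finrank ℂ M = n)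
    (W : LieSubmodule ℂ L M) (_ : ∀ (x : L) (m : M), ⁅x, m⁆ ∈ W) (v : M),
    ∃ w ∈ W, ∀ x : L, ⁅x, v⁆ = ⁅x, w⁆ := by
  induction n using Nat.strong_induction_on with
  | _ n ih =>
  intro M _ _ _ _ _ hn W hW v
  by_cases ht : traceForm ℂ L M = 0
  · exact ⟨0, zero_mem _, fun x => by rw [aux_trivial L M ht, lie_zero]⟩
  obtain ⟨C, hC1, hC2, hC3⟩ := aux_casimir L M ht
  obtain ⟨k, hk, hk1⟩ := ((LinearMap.eventually_isCompl_ker_pow_range_pow C).and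
    (Filter.eventually_ge_atTop 1)).exists
  have hCk : ∀ j : ℕ, ∀ (x : L) m, (C ^ j) ⁅x, m⁆ = ⁅x, (C ^ j) m⁆ := by
    intro j
    induction j with
    | zero => intro x m; simp
    | succ j ihj => intro x m; rw [pow_succ', Module.End.mul_apply, ihj, hC1]; rfl
  let M0 : LieSubmodule ℂ L M :=
    { LinearMap.ker (C ^ k) with
      lie_mem := by
        intro x m hm
        change (C ^ k) m = 0 at hm
        change (C ^ k) ⁅x, m⁆ = 0
        rw [hCk, hm, lie_zero] }
  have hlt : finrank ℂ M0 < finrank ℂ M := by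
    refine Submodule.finrank_lt (s := M0.toSubmodule) ?_
    intro htop
    have h0 : C ^ k = 0 := LinearMap.ker_eq_top.1 htop
    exact hC3 (LinearMap.isNilpotent_trace_of_isNilpotent ⟨k, h0⟩).eq_zero
  have hv : v ∈ LinearMap.ker (C ^ k) ⊔ LinearMap.range (C ^ k) := by
    rw [hk.sup_eq_top]; trivial
  obtain ⟨v0, hv0, v1, ⟨u, rfl⟩, rfl⟩ := Submodule.mem_sup.1 hv
  have hv1 : (C ^ k) u ∈ W := by
    obtain ⟨j, rfl⟩ : ∃ j, k = j + 1 := ⟨k - 1, by omega⟩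
    rw [pow_succ']
    exact hC2 W hW _
  obtain ⟨w, hw, hw2⟩ := ih _ (hn ▸ hlt) M0 rfl (W.comap M0.incl)
    (fun x m => hW x m) ⟨v0, hv0⟩
  refine ⟨w + (C ^ k) u, add_mem hw hv1, fun x => ?_⟩
  rw [lie_add, lie_add]
  congr 1
  exact congrArg Subtype.val (hw2 x)

/-- Lifting of invariants modulo a submodule, in a locally finite module. -/
theorem aux_lift (L : Type*) [LieRing L] [LieAlgebra ℂ L] [FiniteDimensional ℂ L]
    [LieAlgebra.IsSemisimple ℂ L] (M : Type*) [AddCommGroup M] [Module ℂ M]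
    [LieRingModule L M] [LieModule ℂ L M]
    (K N : LieSubmodule ℂ L M) [FiniteDimensional ℂ N] (v : M) (hvN : v ∈ N)
    (hv : ∀ x : L, ⁅x, v⁆ ∈ K) :
    ∃ w ∈ K, ∀ x : L, ⁅x, v⁆ = ⁅x, w⁆ := by
  let P : LieSubmodule ℂ L M :=
    { (K ⊓ N).toSubmodule ⊔ Submodule.span ℂ {v} with
      lie_mem := by
        intro x m hm
        change m ∈ (K ⊓ N).toSubmodule ⊔ Submodule.span ℂ {v} at hm
        obtain ⟨a, ha, b, hb, rfl⟩ := Submodule.mem_sup.1 hm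
        obtain ⟨c, rfl⟩ := Submodule.mem_span_singleton.1 hb
        refine Submodule.mem_sup_left ?_
        rw [lie_add, lie_smul]
        exact add_mem ((K ⊓ N).lie_mem ha)
          (Submodule.smul_mem _ _ ⟨hv x, N.lie_mem hvN⟩) }
  have hPN : P.toSubmodule ≤ N.toSubmodule :=
    sup_le (fun a ha => ha.2) ((Submodule.span_singleton_le_iff_mem _ _).2 hvN)
  have : FiniteDimensional ℂ P := Submodule.finiteDimensional_of_le (S₂ := N.toSubmodule) hPN
  have hvP : v ∈ P := Submodule.mem_sup_right (Submodule.mem_span_singleton_self v)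
  obtain ⟨w, hw, hw2⟩ := aux_H1 L _ P rfl (K.comap P.incl) (by
    rintro x ⟨m, hm⟩
    change ⁅x, m⁆ ∈ K
    change m ∈ (K ⊓ N).toSubmodule ⊔ Submodule.span ℂ {v} at hm
    obtain ⟨a, ha, b, hb, rfl⟩ := Submodule.mem_sup.1 hm
    obtain ⟨c, rfl⟩ := Submodule.mem_span_singleton.1 hb
    rw [lie_add, lie_smul]
    exact add_mem (K.lie_mem ha.1) (Submodule.smul_mem _ _ (hv x))) ⟨v, hvP⟩
  exact ⟨w, hw, fun x => congrArg Subtype.val (hw2 x)⟩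

/-- The theorem of Weyl in projection form. -/
theorem aux_weyl (L : Type*) [LieRing L] [LieAlgebra ℂ L] [FiniteDimensional ℂ L]
    [LieAlgebra.IsSemisimple ℂ L] (M : Type*) [AddCommGroup M] [Module ℂ M]
    [LieRingModule L M] [LieModule ℂ L M] [FiniteDimensional ℂ M] (N : LieSubmodule ℂ L M) :
    ∃ p : M →ₗ[ℂ] M, (∀ m, p m ∈ N) ∧ (∀ m ∈ N, p m = m) ∧ ∀ (x : L) m, p ⁅x, m⁆ = ⁅x, p m⁆ := by
  obtain ⟨q, hq⟩ := N.toSubmodule.subtype.exists_leftInverse_of_injective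
    (Submodule.ker_subtype _)
  let v : M →ₗ[ℂ] M := N.toSubmodule.subtype ∘ₗ q
  have hvN : ∀ m, v m ∈ N := fun m => (q m).2
  have hvi : ∀ m ∈ N, v m = m := fun m hm =>
    congrArg Subtype.val (LinearMap.congr_fun hq ⟨m, hm⟩)
  let K : LieSubmodule ℂ L (M →ₗ[ℂ] M) :=
    { carrier := {f | (∀ m, f m ∈ N) ∧ ∀ m ∈ N, f m = 0}
      add_mem' := fun {f g} hf hg => ⟨fun m => add_mem (hf.1 m) (hg.1 m),
        fun m hm => by simp [hf.2 m hm, hg.2 m hm]⟩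
      zero_mem' := ⟨fun m => zero_mem _, fun m _ => rfl⟩
      smul_mem' := fun c f hf => ⟨fun m => Submodule.smul_mem _ _ (hf.1 m),
        fun m hm => by simp [hf.2 m hm]⟩
      lie_mem := fun {x f} hf => ⟨fun m => by
          rw [LieHom.lie_apply]; exact sub_mem (N.lie_mem (hf.1 m)) (hf.1 _),
        fun m hm => by
          rw [LieHom.lie_apply, hf.2 m hm, hf.2 _ (N.lie_mem hm), lie_zero, sub_zero]⟩ }
  obtain ⟨w, hw, hw2⟩ := aux_lift L (M →ₗ[ℂ] M) K ⊤ v trivial (fun x => ⟨fun m => by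
      rw [LieHom.lie_apply]; exact sub_mem (N.lie_mem (hvN m)) (hvN _),
    fun m hm => by
      rw [LieHom.lie_apply, hvi m hm, hvi _ (N.lie_mem hm), sub_self]⟩)
  refine ⟨v - w, fun m => sub_mem (hvN m) (hw.1 m), fun m hm => ?_, fun x m => ?_⟩
  · rw [LinearMap.sub_apply, hvi m hm, hw.2 m hm, sub_zero]
  · have := LinearMap.congr_fun (hw2 x) m
    rw [LieHom.lie_apply, LieHom.lie_apply] at this
    simp only [LinearMap.sub_apply, lie_sub]
    rw [sub_eq_sub_iff_add_eq_add] at this ⊢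
    rw [add_comm, ← this.symm]

attribute [local instance] LieRing.ofAssociativeRing

theorem aux_weyl_rep (L : Type*) [LieRing L] [LieAlgebra ℂ L] [FiniteDimensional ℂ L]
    [LieAlgebra.IsSemisimple ℂ L] (M : Type*) [AddCommGroup M] [Module ℂ M]
    [FiniteDimensional ℂ M] (ρ : L →ₗ⁅ℂ⁆ Module.End ℂ M) (N : Submodule ℂ M)
    (hN : ∀ x, ∀ m ∈ N, ρ x m ∈ N) :
    ∃ p : M →ₗ[ℂ] M, (∀ m, p m ∈ N) ∧ (∀ m ∈ N, p m = m) ∧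
      ∀ (x : L) m, p (ρ x m) = ρ x (p m) := by
  let _ := LieRingModule.compLieHom M ρ
  have : LieModule ℂ L M := LieModule.compLieHom M ρ
  exact aux_weyl L M { N with lie_mem := fun {x m} hm => hN x m hm }

theorem aux_ideal (L : Type*) [LieRing L] [LieAlgebra ℂ L] [FiniteDimensional ℂ L]
    [LieAlgebra.IsSemisimple ℂ L] (A : Type*) [Ring A] [Algebra ℂ A] [FiniteDimensional ℂ A]
    (φ : L →ₗ⁅ℂ⁆ A) (hφ : Algebra.adjoin ℂ (Set.range φ) = ⊤) (B : Submodule ℂ A)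
    (hl : ∀ a, ∀ b ∈ B, a * b ∈ B) (hr : ∀ a, ∀ b ∈ B, b * a ∈ B) :
    ∃ e ∈ B, (∀ b ∈ B, b * e = b) ∧ ∀ a, a * e = e * a := by
  have hind : ∀ (P : A → Prop), (∀ x, P (φ x)) → (∀ c, P (algebraMap ℂ A c)) →
      (∀ a b, P a → P b → P (a + b)) → (∀ a b, P a → P b → P (a * b)) → ∀ a, P a := by
    intro P h1 h2 h3 h4 a
    have ha : a ∈ Algebra.adjoin ℂ (Set.range φ) := by rw [hφ]; trivial
    induction ha using Algebra.adjoin_induction with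
    | mem x hx => obtain ⟨y, rfl⟩ := hx; exact h1 y
    | algebraMap c => exact h2 c
    | add a b _ _ ha hb => exact h3 a b ha hb
    | mul a b _ _ ha hb => exact h4 a b ha hb
  obtain ⟨p, hp1, hp2, hp3⟩ := aux_weyl_rep L A
    ((Algebra.lmul ℂ A : A →ₐ[ℂ] Module.End ℂ A).toLieHom.comp φ) B (fun x m hm => hl _ m hm)
  let ρ : L →ₗ⁅ℂ⁆ Module.End ℂ A :=
    { toFun := fun x => - LinearMap.mulRight ℂ (φ x)
      map_add' := fun x y => by ext a; simp [mul_add, add_comm]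
      map_smul' := fun c x => by ext a; simp
      map_lie' := fun {x y} => by
        ext a
        simp [LieRing.of_associative_ring_bracket, mul_sub, mul_assoc] }
  obtain ⟨q, hq1, hq2, hq3⟩ := aux_weyl_rep L A ρ B (fun x m hm => neg_mem (hr _ m hm))
  have hpl : ∀ a b, p (a * b) = a * p b := by
    refine hind _ ?_ ?_ ?_ ?_
    · intro x b; exact hp3 x b
    · intro c b; rw [← Algebra.smul_def, ← Algebra.smul_def, map_smul]
    · intro a a' h1 h2 b; rw [add_mul, add_mul, map_add, h1, h2]
    · intro a a' h1 h2 b; rw [mul_assoc, h1, h2, mul_assoc]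
  have hql : ∀ a b, q (b * a) = q b * a := by
    refine hind _ ?_ ?_ ?_ ?_
    · intro x b
      have := hq3 x b
      simpa [ρ] using this
    · intro c b
      rw [← Algebra.commutes, ← Algebra.commutes, ← Algebra.smul_def, ← Algebra.smul_def, map_smul]
    · intro a a' h1 h2 b; rw [mul_add, mul_add, map_add, h1, h2]
    · intro a a' h1 h2 b; rw [← mul_assoc, h2, h1, mul_assoc]
  have he : ∀ b ∈ B, b * p 1 = b := fun b hb => by rw [← hpl, mul_one, hp2 b hb]
  have he' : ∀ b ∈ B, q 1 * b = b := fun b hb => by rw [← hql, one_mul, hq2 b hb]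
  have hee : p 1 = q 1 := by rw [← he' _ (hp1 1), he _ (hq1 1)]
  refine ⟨p 1, hp1 1, he, fun a => ?_⟩
  have h1 := he' _ (hl a _ (hp1 1))
  have h2 := he _ (hr a _ (hp1 1))
  rw [← hee] at h1
  rw [← h1, ← mul_assoc, h2]

theorem aux_adjoin (L : Type*) [LieRing L] [LieAlgebra ℂ L] :
    Algebra.adjoin ℂ (Set.range (UniversalEnvelopingAlgebra.ι ℂ (L := L))) = ⊤ := by
  set S := Algebra.adjoin ℂ (Set.range (UniversalEnvelopingAlgebra.ι ℂ (L := L))) with hS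
  let g : L →ₗ⁅ℂ⁆ S :=
    { toFun := fun x => ⟨UniversalEnvelopingAlgebra.ι ℂ x, Algebra.subset_adjoin ⟨x, rfl⟩⟩
      map_add' := fun x y => Subtype.ext (by simp only [map_add]; rfl)
      map_smul' := fun c x => Subtype.ext (by simp only [map_smul]; rfl)
      map_lie' := fun {x y} => Subtype.ext (by simp only [LieHom.map_lie]; rfl) }
  have h : S.val.comp (UniversalEnvelopingAlgebra.lift ℂ g) = AlgHom.id ℂ _ := by
    apply UniversalEnvelopingAlgebra.hom_ext
    ext x
    change ((UniversalEnvelopingAlgebra.lift ℂ g (UniversalEnvelopingAlgebra.ι ℂ x) : S) : 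
      UniversalEnvelopingAlgebra ℂ L) = UniversalEnvelopingAlgebra.ι ℂ x
    rw [UniversalEnvelopingAlgebra.lift_ι_apply]
    rfl
  rw [eq_top_iff]
  intro u _
  have h' : ((UniversalEnvelopingAlgebra.lift ℂ g u : S) : UniversalEnvelopingAlgebra ℂ L) = u :=
    DFunLike.congr_fun h u
  rw [← h']
  exact (UniversalEnvelopingAlgebra.lift ℂ g u).2

theorem aux_locfin (L : Type*) [LieRing L] [LieAlgebra ℂ L] [FiniteDimensional ℂ L]
    (u : UniversalEnvelopingAlgebra ℂ L) :
    ∃ N : Submodule ℂ (UniversalEnvelopingAlgebra ℂ L), N.FG ∧ u ∈ N ∧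
      ∀ (x : L), ∀ n ∈ N, ⁅UniversalEnvelopingAlgebra.ι ℂ x, n⁆ ∈ N := by
  have hu : u ∈ Algebra.adjoin ℂ (Set.range (UniversalEnvelopingAlgebra.ι ℂ (L := L))) := by
    rw [aux_adjoin]; trivial
  induction hu using Algebra.adjoin_induction with
  | mem x hx =>
    refine ⟨LinearMap.range (UniversalEnvelopingAlgebra.ι ℂ (L := L)).toLinearMap, ?_,
      hx, ?_⟩
    · rw [LinearMap.range_eq_map]
      exact (Module.Finite.fg_top).map _
    · rintro x _ ⟨y, rfl⟩
      exact ⟨⁅x, y⁆, LieHom.map_lie _ _ _⟩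
  | algebraMap c =>
    refine ⟨Submodule.span ℂ {algebraMap ℂ _ c}, Submodule.fg_span_singleton _,
      Submodule.mem_span_singleton_self _, ?_⟩
    intro x n hn
    obtain ⟨d, rfl⟩ := Submodule.mem_span_singleton.1 hn
    rw [lie_smul, LieRing.of_associative_ring_bracket, Algebra.commutes, sub_self, smul_zero]
    exact zero_mem _
  | add a b _ _ ha hb =>
    obtain ⟨N, h1, h2, h3⟩ := ha
    obtain ⟨N', h1', h2', h3'⟩ := hb
    refine ⟨N ⊔ N', h1.sup h1', add_mem (Submodule.mem_sup_left h2) (Submodule.mem_sup_right h2'),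
      fun x n hn => ?_⟩
    obtain ⟨y, hy, z, hz, rfl⟩ := Submodule.mem_sup.1 hn
    rw [lie_add]
    exact add_mem (Submodule.mem_sup_left (h3 x y hy)) (Submodule.mem_sup_right (h3' x z hz))
  | mul a b _ _ ha hb =>
    obtain ⟨N, h1, h2, h3⟩ := ha
    obtain ⟨N', h1', h2', h3'⟩ := hb
    refine ⟨N * N', h1.mul h1', Submodule.mul_mem_mul h2 h2', fun x n hn => ?_⟩
    induction hn using Submodule.mul_induction_on' with
    | mem_mul_mem y hy z hz =>
      have : ⁅UniversalEnvelopingAlgebra.ι ℂ x, y * z⁆ =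
          ⁅UniversalEnvelopingAlgebra.ι ℂ x, y⁆ * z + y * ⁅UniversalEnvelopingAlgebra.ι ℂ x, z⁆ := by
        simp only [LieRing.of_associative_ring_bracket]; noncomm_ring
      rw [this]
      exact add_mem (Submodule.mul_mem_mul (h3 x y hy) hz) (Submodule.mul_mem_mul hy (h3' x z hz))
    | add y _ z _ h1 h2 => rw [lie_add]; exact add_mem h1 h2

theorem aux_main
    (L : Type*) [LieRing L] [LieAlgebra ℂ L] [FiniteDimensional ℂ L]
    [LieAlgebra.IsSemisimple ℂ L]
    (I : Ideal (UniversalEnvelopingAlgebra ℂ L))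
    (hI2 : ∀ a ∈ I, ∀ r : UniversalEnvelopingAlgebra ℂ L, a * r ∈ I)
    (hfd : FiniteDimensional ℂ
      (UniversalEnvelopingAlgebra ℂ L ⧸ Submodule.restrictScalars ℂ I))
    (hmax : (I.comap (Subalgebra.center ℂ (UniversalEnvelopingAlgebra ℂ L)).val).IsMaximal) :
    ∀ J : Ideal (UniversalEnvelopingAlgebra ℂ L),
      (∀ a ∈ J, ∀ r : UniversalEnvelopingAlgebra ℂ L, a * r ∈ J) → I < J → J = ⊤ := by
  intro J hJ hIJ
  have : I.IsTwoSided := ⟨fun b ha => hI2 _ ha b⟩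
  let π : UniversalEnvelopingAlgebra ℂ L →ₐ[ℂ] (UniversalEnvelopingAlgebra ℂ L ⧸ I) :=
    Ideal.Quotient.mkₐ ℂ I
  have hπs : Function.Surjective π := Ideal.Quotient.mkₐ_surjective ℂ I
  have hπ0 : ∀ u, π u = 0 ↔ u ∈ I := fun u => Ideal.Quotient.eq_zero_iff_mem
  have : FiniteDimensional ℂ (UniversalEnvelopingAlgebra ℂ L ⧸ I) :=
    Module.Finite.equiv (Submodule.Quotient.restrictScalarsEquiv ℂ I)
  let φ : L →ₗ⁅ℂ⁆ (UniversalEnvelopingAlgebra ℂ L ⧸ I) :=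
    π.toLieHom.comp (UniversalEnvelopingAlgebra.ι ℂ)
  have hφ : Algebra.adjoin ℂ (Set.range φ) = ⊤ := by
    have : Set.range φ = π '' Set.range (UniversalEnvelopingAlgebra.ι ℂ (L := L)) := by
      rw [← Set.range_comp]; rfl
    rw [this, ← AlgHom.map_adjoin, aux_adjoin, Algebra.map_top]
    exact (AlgHom.range_eq_top π).2 hπs
  obtain ⟨e, he, he1, he2⟩ := aux_ideal L _ φ hφ
    ((Submodule.restrictScalars ℂ J).map π.toLinearMap)
    (by
      rintro a _ ⟨b, hb, rfl⟩
      obtain ⟨a, rfl⟩ := hπs a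
      exact ⟨a * b, J.mul_mem_left a hb, map_mul π a b⟩)
    (by
      rintro a _ ⟨b, hb, rfl⟩
      obtain ⟨a, rfl⟩ := hπs a
      exact ⟨b * a, hJ b hb a, map_mul π b a⟩)
  obtain ⟨u, hu, rfl⟩ := he
  change ∀ b ∈ _, b * π u = b at he1
  change ∀ a, a * π u = π u * a at he2
  obtain ⟨N, hN1, hN2, hN3⟩ := aux_locfin L u
  -- lift to a central element
  obtain ⟨w, hw, hw2⟩ : ∃ w ∈ I, ∀ x : L, ⁅UniversalEnvelopingAlgebra.ι ℂ x, u⁆ =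
      ⁅UniversalEnvelopingAlgebra.ι ℂ x, w⁆ := by
    let _ := LieRingModule.compLieHom (UniversalEnvelopingAlgebra ℂ L)
      (UniversalEnvelopingAlgebra.ι ℂ (L := L))
    have : LieModule ℂ L (UniversalEnvelopingAlgebra ℂ L) :=
      LieModule.compLieHom _ (UniversalEnvelopingAlgebra.ι ℂ (L := L))
    let N' : LieSubmodule ℂ L (UniversalEnvelopingAlgebra ℂ L) :=
      { N with lie_mem := fun {x m} hm => hN3 x m hm }
    have : FiniteDimensional ℂ N' := Module.Finite.iff_fg.2 hN1
    let I' : LieSubmodule ℂ L (UniversalEnvelopingAlgebra ℂ L) :=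
      { Submodule.restrictScalars ℂ I with
        lie_mem := fun {x m} hm => by
          change ⁅UniversalEnvelopingAlgebra.ι ℂ x, m⁆ ∈ I
          rw [LieRing.of_associative_ring_bracket]
          exact sub_mem (I.mul_mem_left _ hm) (hI2 _ hm _) }
    refine aux_lift L _ I' N' u hN2 (fun x => ?_)
    change ⁅UniversalEnvelopingAlgebra.ι ℂ x, u⁆ ∈ I
    rw [LieRing.of_associative_ring_bracket, ← hπ0, map_sub, map_mul, map_mul, he2, sub_self]
  have hzc : u - w ∈ Subalgebra.center ℂ (UniversalEnvelopingAlgebra ℂ L) := by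
    rw [Subalgebra.mem_center_iff]
    intro b
    have hb : b ∈ Algebra.adjoin ℂ (Set.range (UniversalEnvelopingAlgebra.ι ℂ (L := L))) := by
      rw [aux_adjoin]; trivial
    induction hb using Algebra.adjoin_induction with
    | mem x hx =>
      obtain ⟨y, rfl⟩ := hx
      have := hw2 y
      rw [← sub_eq_zero, ← lie_sub, LieRing.of_associative_ring_bracket, sub_eq_zero] at this
      exact this
    | algebraMap c => exact Algebra.commutes c _
    | add a b _ _ ha hb => rw [add_mul, mul_add, ha, hb]
    | mul a b _ _ ha hb => rw [mul_assoc, hb, ← mul_assoc, ha, mul_assoc]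
  have hwπ : π w = 0 := (hπ0 w).2 hw
  let z : Subalgebra.center ℂ (UniversalEnvelopingAlgebra ℂ L) := ⟨u - w, hzc⟩
  have hprime := hmax.isPrime
  have hmem : z * (1 - z) ∈ I.comap (Subalgebra.center ℂ (UniversalEnvelopingAlgebra ℂ L)).val := by
    change (u - w) * (1 - (u - w)) ∈ I
    rw [← hπ0, map_mul, map_sub, map_sub, map_sub, hwπ, sub_zero, map_one, mul_sub, mul_one,
      he1 (π u) ⟨u, hu, rfl⟩, sub_self]
  rcases hprime.mem_or_mem hmem with h | h
  · exfalso
    replace h : u - w ∈ I := h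
    have hu0 : π u = 0 := by
      rw [← hπ0, map_sub, hwπ, sub_zero] at h; exact h
    refine not_le_of_gt hIJ (fun b hb => ?_)
    rw [← hπ0, ← he1 (π b) ⟨b, hb, rfl⟩, hu0, mul_zero]
  · replace h : 1 - (u - w) ∈ I := h
    rw [Ideal.eq_top_iff_one]
    have := add_mem (hIJ.le h) (sub_mem hu (hIJ.le hw))
    rwa [sub_add_cancel] at this

end Aux

/-- Let `L` be a finite-dimensional semisimple complex Lie algebra, `U(L)` its
universal enveloping algebra and `Z(U(L))` its center.  If `I` is a proper two-sided ideal of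
`U(L)` of finite codimension (the quotient `U(L)/I` is finite-dimensional over `ℂ`) such that
`I ∩ Z(U(L))` is a maximal ideal of `Z(U(L))`, then `I` is a maximal two-sided ideal of `U(L)`.
Here ideals are Mathlib left ideals together with the hypothesis that they are also closed under
right multiplication, and `I ∩ Z(U(L))` is the preimage of `I` under the inclusion of the
center. -/
theorem maximal_two_sided_ideal_of_finite_codimension
    (L : Type*) [LieRing L] [LieAlgebra ℂ L] [FiniteDimensional ℂ L]
    [LieAlgebra.IsSemisimple ℂ L]
    (I : Ideal (UniversalEnvelopingAlgebra ℂ L))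
    (hI2 : ∀ a ∈ I, ∀ r : UniversalEnvelopingAlgebra ℂ L, a * r ∈ I)
    (hne : I ≠ ⊤)
    (hfd : FiniteDimensional ℂ
      (UniversalEnvelopingAlgebra ℂ L ⧸ Submodule.restrictScalars ℂ I))
    (hmax : (I.comap (Subalgebra.center ℂ (UniversalEnvelopingAlgebra ℂ L)).val).IsMaximal) :
    ∀ J : Ideal (UniversalEnvelopingAlgebra ℂ L),
      (∀ a ∈ J, ∀ r : UniversalEnvelopingAlgebra ℂ L, a * r ∈ J) → I < J → J = ⊤ := by
  exact aux_main L I hI2 hfd hmax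
end

section
/- Let F be a field of characteristic zero and k ≥ 2. For every n ≥ 1, the n-th differential codimension of M_k(F) under the action of the Lie algebra of all its derivations equals c_n^L(M_k(F)) = k^{2(n+1)} − (k² − 1)(n + 1). Concretely: the dimension of the F-subspace of multilinear maps M_k(F)^n → M_k(F) spanned by the maps (x_1, …, x_n) ↦ u_1(x_{σ(1)})·u_2(x_{σ(2)})⋯u_n(x_{σ(n)}), over all permutations σ ∈ S_n and all u_1, …, u_n ∈ U, equals k^{2(n+1)} − (k² − 1)(n + 1). -/
/-- `U`: the unital subalgebra of `End_F(M_k(F))` generated by the inner derivations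
`ad_a = L_a − R_a`, `a ∈ M_k(F)`. -/
noncomputable def innerDerivationsAlgebra (F : Type*) [Field F] (k : ℕ) :
    Subalgebra F (Module.End F (Matrix (Fin k) (Fin k) F)) :=
  Algebra.adjoin F (Set.range fun a : Matrix (Fin k) (Fin k) F =>
    LinearMap.mulLeft F a - LinearMap.mulRight F a)

/-- The space of multilinear maps `M_k(F)^n → M_k(F)` spanned by the maps
`(x_1, …, x_n) ↦ u_1(x_{σ(1)})·u_2(x_{σ(2)})⋯u_n(x_{σ(n)})` over all permutations `σ ∈ S_n`
and all `u_1, …, u_n ∈ U`; its dimension is the `n`-th differential codimension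
`c_n^L(M_k(F))`. -/
noncomputable def diffMultilinearSpan (F : Type*) [Field F] (k n : ℕ) :
    Submodule F (MultilinearMap F (fun _ : Fin n => Matrix (Fin k) (Fin k) F)
      (Matrix (Fin k) (Fin k) F)) :=
  Submodule.span F
    {g | ∃ (σ : Equiv.Perm (Fin n)) (u : Fin n → innerDerivationsAlgebra F k),
        g = MultilinearMap.domDomCongr σ
          ((MultilinearMap.mkPiAlgebraFin F n (Matrix (Fin k) (Fin k) F)).compLinearMap
            fun i => (u i : Module.End F (Matrix (Fin k) (Fin k) F)))}

namespace DiffCodim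

open Matrix

variable {F : Type*} [Field F] {k : ℕ}

/-- trace-zero matrices -/
noncomputable def sl (F : Type*) [Field F] (k : ℕ) : Submodule F (Matrix (Fin k) (Fin k) F) :=
  LinearMap.ker (Matrix.traceLinearMap (Fin k) F F)

theorem mem_sl {x : Matrix (Fin k) (Fin k) F} : x ∈ sl F k ↔ x.trace = 0 := by
  simp [sl]

/-- normalized trace -/
noncomputable def tau (F : Type*) [Field F] (k : ℕ) : Matrix (Fin k) (Fin k) F →ₗ[F] F :=
  (k : F)⁻¹ • Matrix.traceLinearMap (Fin k) F F

theorem tau_apply (x : Matrix (Fin k) (Fin k) F) : tau F k x = (k : F)⁻¹ * x.trace := by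
  simp [tau]

/-- projection to scalars -/
noncomputable def pr (F : Type*) [Field F] (k : ℕ) :
    Module.End F (Matrix (Fin k) (Fin k) F) :=
  (tau F k).smulRight 1

/-- projection to trace zero -/
noncomputable def qr (F : Type*) [Field F] (k : ℕ) :
    Module.End F (Matrix (Fin k) (Fin k) F) := 1 - pr F k

theorem pr_apply (x : Matrix (Fin k) (Fin k) F) : pr F k x = tau F k x • 1 := by
  simp [pr]

theorem qr_apply (x : Matrix (Fin k) (Fin k) F) : qr F k x = x - tau F k x • 1 := by
  simp [qr, pr]

theorem tau_one [CharZero F] (hk : 2 ≤ k) : tau F k 1 = 1 := by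
  have : (k : F) ≠ 0 := by exact_mod_cast (by omega : k ≠ 0)
  simp [tau_apply, Matrix.trace_one, this]

theorem qr_one [CharZero F] (hk : 2 ≤ k) : qr F k 1 = 0 := by
  simp [qr_apply, tau_one hk]

theorem trace_qr [CharZero F] (hk : 2 ≤ k) (x : Matrix (Fin k) (Fin k) F) :
    (qr F k x).trace = 0 := by
  have : (k : F) ≠ 0 := by exact_mod_cast (by omega : k ≠ 0)
  rw [qr_apply, Matrix.trace_sub, Matrix.trace_smul, Matrix.trace_one, tau_apply]
  simp
  field_simp
  simp

theorem tau_of_mem {x : Matrix (Fin k) (Fin k) F} (hx : x ∈ sl F k) : tau F k x = 0 := by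
  rw [tau_apply, mem_sl.1 hx, mul_zero]

theorem qr_of_mem {x : Matrix (Fin k) (Fin k) F} (hx : x ∈ sl F k) : qr F k x = x := by
  rw [qr_apply, tau_of_mem hx]; simp

theorem trace_qr_mul (x y : Matrix (Fin k) (Fin k) F) :
    (qr F k x * y).trace = (x * qr F k y).trace := by
  rw [qr_apply, qr_apply, sub_mul, mul_sub, Matrix.trace_sub, Matrix.trace_sub, tau_apply,
    tau_apply]
  simp
  ring

/-- A subspace stable under all `ad` and containing one off-diagonal unit contains `sl`. -/
theorem sl_le_of_ad [CharZero F] (N : Submodule F (Matrix (Fin k) (Fin k) F))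
    (hN : ∀ c x : Matrix (Fin k) (Fin k) F, x ∈ N → c * x - x * c ∈ N)
    (i j : Fin k) (hij : i ≠ j) (h : Matrix.single i j (1 : F) ∈ N) : sl F k ≤ N := by
  have hrow : ∀ i j l : Fin k, i ≠ j → l ≠ j → Matrix.single i j (1 : F) ∈ N →
      Matrix.single l j (1 : F) ∈ N := by
    intro i j l h1 h2 h3
    have := hN (Matrix.single l i 1) _ h3
    rwa [Matrix.single_mul_single_same, Matrix.single_mul_single_of_ne _ _ _ _ h2.symm,
      sub_zero, mul_one] at this
  have hcol : ∀ i j l : Fin k, i ≠ j → l ≠ i → Matrix.single i j (1 : F) ∈ N →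
      Matrix.single i l (1 : F) ∈ N := by
    intro i j l h1 h2 h3
    have := hN (Matrix.single j l 1) _ h3
    rw [Matrix.single_mul_single_same, Matrix.single_mul_single_of_ne _ _ _ _ h2,
      zero_sub, mul_one] at this
    simpa using N.neg_mem this
  have hji : Matrix.single j i (1 : F) ∈ N := by
    have := hN (Matrix.single j i 1) _ (hN (Matrix.single j i 1) _ h)
    simp only [Matrix.single_mul_single_same, mul_sub, sub_mul, mul_one,
      Matrix.single_mul_single_of_ne _ _ _ _ hij] at this
    have h2 := N.smul_mem (-(2 : F)⁻¹) this
    convert h2 using 1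
    ext a b
    simp
    ring
  have hall : ∀ a b : Fin k, a ≠ b → Matrix.single a b (1 : F) ∈ N := by
    intro a b hab
    by_cases ha : a = j
    · subst ha
      by_cases hb : b = i
      · subst hb; exact hji
      · exact hrow i b a (Ne.symm hb) hab (hcol i a b hij hb h)
    · exact hcol a j b ha hab.symm (hrow i j a hij ha h)
  have hdiag : ∀ a b : Fin k, Matrix.single a a (1 : F) - Matrix.single b b (1 : F) ∈ N := by
    intro a b
    by_cases hab : a = b
    · subst hab; simp
    · have := hN (Matrix.single a b 1) _ (hall b a (Ne.symm hab))
      simpa [Matrix.single_mul_single_same] using this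
  intro x hx
  rw [mem_sl] at hx
  have hx2 : x = (∑ a, ∑ b, if a = b then x a a • (Matrix.single a a (1 : F) -
      Matrix.single i i (1 : F)) else x a b • Matrix.single a b (1 : F)) := by
    have e1 : (∑ a, ∑ b, if a = b then x a a • (Matrix.single a a (1 : F) -
      Matrix.single i i (1 : F)) else x a b • Matrix.single a b (1 : F)) =
      (∑ a, ∑ b, (x a b • Matrix.single a b (1 : F) -
        if a = b then x a a • Matrix.single i i (1 : F) else 0)) := by
      refine Finset.sum_congr rfl fun a _ => Finset.sum_congr rfl fun b _ => ?_
      split_ifs with hh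
      · subst hh; rw [smul_sub]
      · simp
    rw [e1]
    simp only [Finset.sum_sub_distrib, Finset.sum_ite_eq, Finset.mem_univ, if_true]
    rw [← Finset.sum_smul]
    have : ∑ a, x a a = 0 := hx
    rw [this, zero_smul, sub_zero]
    conv_lhs => rw [Matrix.matrix_eq_sum_single x]
    simp
  rw [hx2]
  refine N.sum_mem fun a _ => N.sum_mem fun b _ => ?_
  split_ifs with hh
  · exact N.smul_mem _ (hdiag _ _)
  · exact N.smul_mem _ (hall _ _ hh)

/-- `x ↦ tr (x a) b`, bilinear in `a`, `b`. -/
noncomputable def dd (F : Type*) [Field F] (k : ℕ) : Matrix (Fin k) (Fin k) F →ₗ[F]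
    Matrix (Fin k) (Fin k) F →ₗ[F] Module.End F (Matrix (Fin k) (Fin k) F) :=
  LinearMap.mk₂ F
    (fun a b => ((Matrix.traceLinearMap (Fin k) F F).comp (LinearMap.mulRight F a)).smulRight b)
    (by intros; ext1 x; simp [mul_add, add_smul]) (by intros; ext1 x; simp [smul_smul])
    (by intros; ext1 x; simp) (by intros c m y; ext1 x; simp [smul_smul, mul_comm c])

theorem dd_apply (a b x : Matrix (Fin k) (Fin k) F) : dd F k a b x = (x * a).trace • b := by
  simp [dd]

theorem ad_mem (a : Matrix (Fin k) (Fin k) F) :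
    LinearMap.mulLeft F a - LinearMap.mulRight F a ∈ innerDerivationsAlgebra F k :=
  Algebra.subset_adjoin ⟨a, rfl⟩

theorem dd_mem [CharZero F] (hk : 2 ≤ k) {a b : Matrix (Fin k) (Fin k) F}
    (ha : a ∈ sl F k) (hb : b ∈ sl F k) : dd F k a b ∈ innerDerivationsAlgebra F k := by
  let i : Fin k := ⟨0, by omega⟩
  let j : Fin k := ⟨1, by omega⟩
  have hij : i ≠ j := by simp [i, j]
  let U := Subalgebra.toSubmodule (innerDerivationsAlgebra F k)
  let E : Matrix (Fin k) (Fin k) F := Matrix.single i j 1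
  have h0 : dd F k E E ∈ U := by
    have h1 := (innerDerivationsAlgebra F k).mul_mem (ad_mem E) (ad_mem E)
    have h2 := (innerDerivationsAlgebra F k).smul_mem h1 (-(2 : F)⁻¹)
    have hEE : E * E = 0 := Matrix.single_mul_single_of_ne _ _ _ _ hij.symm _
    have hEx : ∀ x : Matrix (Fin k) (Fin k) F, E * x * E = (x * E).trace • E := by
      intro x
      rw [Matrix.trace_mul_comm]
      ext a b
      simp only [E, Matrix.trace_single_mul]
      simp only [Matrix.mul_assoc]
      simp [Matrix.mul_apply, Matrix.single_apply, ite_and]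
      split_ifs <;> rfl
    change dd F k E E ∈ innerDerivationsAlgebra F k
    convert h2 using 1
    ext1 x
    rw [dd_apply, ← hEx]
    simp only [LinearMap.smul_apply, Module.End.mul_apply, LinearMap.sub_apply,
      LinearMap.mulLeft_apply, LinearMap.mulRight_apply, mul_sub, sub_mul]
    rw [← mul_assoc E E x, hEE, mul_assoc x E E, hEE, ← mul_assoc E x E]
    simp only [zero_mul, mul_zero, zero_sub, sub_zero]
    rw [← neg_add', smul_neg, neg_smul, neg_neg, ← two_smul F, smul_smul, inv_mul_cancel₀ two_ne_zero,
      one_smul]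
  have h1 : sl F k ≤ U.comap (dd F k E) := by
    refine sl_le_of_ad _ ?_ i j hij h0
    intro c x hx
    have := (innerDerivationsAlgebra F k).mul_mem (ad_mem c) hx
    change dd F k E (c * x - x * c) ∈ innerDerivationsAlgebra F k
    convert this using 1
    ext1 y
    simp [dd_apply, smul_sub]
  have h2 : sl F k ≤ U.comap ((dd F k).flip b) := by
    refine sl_le_of_ad _ ?_ i j hij (h1 hb)
    intro c x hx
    have := (innerDerivationsAlgebra F k).neg_mem
      ((innerDerivationsAlgebra F k).mul_mem hx (ad_mem c))
    change dd F k (c * x - x * c) b ∈ innerDerivationsAlgebra F k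
    convert this using 1
    ext1 y
    simp only [dd_apply, LinearMap.neg_apply, Module.End.mul_apply, LinearMap.sub_apply,
      LinearMap.mulLeft_apply, LinearMap.mulRight_apply, LinearMap.flip_apply]
    rw [← neg_smul]
    congr 1
    rw [mul_sub, sub_mul, Matrix.trace_sub, Matrix.trace_sub, ← mul_assoc, ← mul_assoc,
      Matrix.trace_mul_comm (y * x) c, ← mul_assoc]
    ring
  exact h2 ha

theorem mem_U [CharZero F] (hk : 2 ≤ k) (g : Module.End F (Matrix (Fin k) (Fin k) F))
    (h1 : g 1 = 0) (h2 : ∀ x, g x ∈ sl F k) : g ∈ innerDerivationsAlgebra F k := by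
  have : g = ∑ a, ∑ b, dd F k (qr F k (Matrix.single b a 1)) (g (Matrix.single a b 1)) := by
    ext1 x
    have hx : g x = g (qr F k x) := by
      rw [qr_apply, map_sub, map_smul, h1]; simp
    rw [hx]
    conv_lhs => rw [Matrix.matrix_eq_sum_single (qr F k x)]
    simp only [map_sum, LinearMap.sum_apply, dd_apply]
    refine Finset.sum_congr rfl fun a _ => Finset.sum_congr rfl fun b _ => ?_
    rw [← trace_qr_mul, Matrix.trace_mul_comm, Matrix.trace_single_mul, ← map_smul]
    simp
  rw [this]
  exact sum_mem fun a _ => sum_mem fun b _ => dd_mem hk (mem_sl.2 (trace_qr hk _)) (h2 _)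

theorem pr_mem [CharZero F] (hk : 2 ≤ k) : pr F k ∈ innerDerivationsAlgebra F k := by
  have h := mem_U hk (qr F k) (qr_one hk) (fun x => mem_sl.2 (trace_qr hk x))
  have h2 := (innerDerivationsAlgebra F k).sub_mem (one_mem _) h
  simpa [qr] using h2

theorem U_prop {u : Module.End F (Matrix (Fin k) (Fin k) F)}
    (hu : u ∈ innerDerivationsAlgebra F k) :
    u 1 ∈ (1 : Submodule F (Matrix (Fin k) (Fin k) F)) ∧ ∀ x ∈ sl F k, u x ∈ sl F k := by
  induction hu using Algebra.adjoin_induction with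
  | mem x hx =>
    obtain ⟨a, rfl⟩ := hx
    refine ⟨by simp, fun x hx => ?_⟩
    rw [mem_sl]
    simp [Matrix.trace_sub, Matrix.trace_mul_comm a x]
  | algebraMap r =>
    refine ⟨?_, fun x hx => ?_⟩
    · simpa [Algebra.algebraMap_eq_smul_one] using Submodule.smul_mem _ r (one_mem _)
    · simpa [Algebra.algebraMap_eq_smul_one] using Submodule.smul_mem _ r hx
  | add x y hx hy h1 h2 =>
    exact ⟨Submodule.add_mem _ h1.1 h2.1, fun z hz => Submodule.add_mem _ (h1.2 z hz) (h2.2 z hz)⟩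
  | mul x y hx hy h1 h2 =>
    refine ⟨?_, fun z hz => h1.2 _ (h2.2 z hz)⟩
    obtain ⟨c, hc⟩ := Submodule.mem_one.1 h2.1
    rw [Module.End.mul_apply, ← hc, Algebra.algebraMap_eq_smul_one, map_smul]
    exact Submodule.smul_mem _ _ h1.1

/-! ### Products of submodules -/

section prod
variable {A : Type*} [Ring A] [Algebra F A]

theorem prod_ofFn_pow {R : Type*} [Monoid R] (x : R) : ∀ {n : ℕ} (t : Fin n → ℕ),
    (List.ofFn fun i => x ^ t i).prod = x ^ ∑ i, t i
  | 0, t => by simp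
  | n + 1, t => by
    rw [List.ofFn_succ, List.prod_cons, prod_ofFn_pow x fun i => t i.succ, Fin.sum_univ_succ,
      pow_add]

theorem prod_ofFn_mem : ∀ {n : ℕ} (V : Fin n → Submodule F A) (a : Fin n → A)
    (_ : ∀ i, a i ∈ V i), (List.ofFn a).prod ∈ (List.ofFn V).prod
  | 0, V, a, h => by simpa using ⟨1, map_one _⟩
  | n + 1, V, a, h => by
    rw [List.ofFn_succ, List.prod_cons, List.ofFn_succ, List.prod_cons]
    exact Submodule.mul_mem_mul (h 0) (prod_ofFn_mem _ _ fun i => h i.succ)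

theorem prod_ofFn_le : ∀ {n : ℕ} (V : Fin n → Submodule F A),
    (List.ofFn V).prod ≤ Submodule.span F {m | ∃ a : Fin n → A, (∀ i, a i ∈ V i) ∧
      m = (List.ofFn a).prod}
  | 0, V => by
    rw [List.ofFn_zero, List.prod_nil, Submodule.one_eq_span]
    refine Submodule.span_mono ?_
    rintro _ rfl
    exact ⟨Fin.elim0, fun i => i.elim0, by simp⟩
  | n + 1, V => by
    rw [List.ofFn_succ, List.prod_cons, Submodule.mul_le]
    intro m hm y hy
    have hy2 := prod_ofFn_le (fun i => V i.succ) hy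
    suffices h : Submodule.span F {m | ∃ a : Fin n → A, (∀ i, a i ∈ V i.succ) ∧
      m = (List.ofFn a).prod} ≤ (Submodule.span F {m | ∃ a : Fin (n+1) → A, (∀ i, a i ∈ V i) ∧
      m = (List.ofFn a).prod}).comap (LinearMap.mulLeft F m) from h hy2
    rw [Submodule.span_le]
    rintro _ ⟨a, ha, rfl⟩
    refine Submodule.subset_span ⟨Fin.cons m a, ?_, ?_⟩
    · intro i
      refine Fin.cases ?_ ?_ i
      · simpa using hm
      · simpa using ha
    · simp [List.ofFn_succ]

end prod

theorem sl_sq (hk : 2 ≤ k) : sl F k * sl F k = ⊤ := by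
  rw [eq_top_iff]
  intro x _
  rw [Matrix.matrix_eq_sum_single x]
  refine Submodule.sum_mem _ fun a _ => Submodule.sum_mem _ fun b _ => ?_
  have hne : ∀ a b : Fin k, a ≠ b → ∀ c : F, Matrix.single a b c ∈ sl F k := fun a b h c =>
    mem_sl.2 (Matrix.trace_single_eq_of_ne _ _ _ h)
  by_cases hab : a = b
  · subst hab
    have : Nontrivial (Fin k) := Fin.nontrivial_iff_two_le.2 hk
    obtain ⟨c, hc⟩ := exists_ne a
    have := Submodule.mul_mem_mul (hne a c hc.symm (x a a)) (hne c a hc 1)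
    simpa [Matrix.single_mul_single_same] using this
  · have h1 : Matrix.single a a (1 : F) - Matrix.single b b 1 ∈ sl F k := by
      rw [mem_sl]; simp [Matrix.trace_sub]
    have := Submodule.mul_mem_mul h1 (hne a b hab (x a b))
    simpa [sub_mul, Matrix.single_mul_single_same,
      Matrix.single_mul_single_of_ne _ _ _ _ (Ne.symm hab)] using this

theorem sl_pow (hk : 2 ≤ k) (s : ℕ) : sl F k ^ (s + 2) = ⊤ := by
  induction s with
  | zero => rw [zero_add, pow_two, sl_sq hk]
  | succ s ih =>
    rw [show s + 1 + 2 = (s + 2) + 1 by ring, pow_succ, ih, eq_top_iff]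
    exact (sl_sq (F := F) hk).ge.trans (mul_le_mul' le_top le_rfl)

/-! ### The multilinear part -/

/-- `x ↦ (∏ φ i (x i)) • m`, linear in `m`. -/
noncomputable def rk {n : ℕ} (φ : Fin n → Matrix (Fin k) (Fin k) F →ₗ[F] F) :
    Matrix (Fin k) (Fin k) F →ₗ[F] MultilinearMap F (fun _ : Fin n => Matrix (Fin k) (Fin k) F)
      (Matrix (Fin k) (Fin k) F) where
  toFun m := ((MultilinearMap.mkPiAlgebra F (Fin n) F).compLinearMap φ).smulRight m
  map_add' m m' := by refine MultilinearMap.ext fun x => ?_; simp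
  map_smul' c m := by refine MultilinearMap.ext fun x => ?_; simp [smul_smul, mul_comm c]

theorem rk_apply {n : ℕ} (φ : Fin n → Matrix (Fin k) (Fin k) F →ₗ[F] F)
    (m : Matrix (Fin k) (Fin k) F) (x : Fin n → Matrix (Fin k) (Fin k) F) :
    rk φ m x = (∏ i, φ i (x i)) • m := by
  simp [rk]

theorem prodV {n : ℕ} (T : Finset (Fin n)) :
    (List.ofFn fun i => sl F k ^ (if i ∈ T then 1 else 0)).prod = sl F k ^ T.card := by
  rw [prod_ofFn_pow]
  simp

theorem rk_mem [CharZero F] (hk : 2 ≤ k) {n : ℕ} (T : Finset (Fin n))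
    (φ : Fin n → Matrix (Fin k) (Fin k) F →ₗ[F] F)
    (h1 : ∀ i ∈ T, φ i 1 = 0) (h2 : ∀ i ∉ T, ∃ c : F, φ i = c • tau F k)
    (m : Matrix (Fin k) (Fin k) F) (hm : m ∈ sl F k ^ T.card) :
    rk φ m ∈ diffMultilinearSpan F k n := by
  rw [← prodV] at hm
  suffices h : Submodule.span F {m | ∃ a : Fin n → Matrix (Fin k) (Fin k) F,
      (∀ i, a i ∈ sl F k ^ (if i ∈ T then 1 else 0)) ∧ m = (List.ofFn a).prod} ≤
      (diffMultilinearSpan F k n).comap (rk φ) from h (prod_ofFn_le _ hm)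
  rw [Submodule.span_le]
  rintro _ ⟨a, ha, rfl⟩
  have hu : ∀ i, (φ i).smulRight (a i) ∈ innerDerivationsAlgebra F k := by
    intro i
    have hai := ha i
    by_cases hi : i ∈ T
    · rw [if_pos hi, pow_one] at hai
      refine mem_U hk _ ?_ ?_
      · simp [h1 i hi]
      · intro x
        simpa using Submodule.smul_mem _ _ hai
    · rw [if_neg hi, pow_zero] at hai
      obtain ⟨c, hc⟩ := h2 i hi
      obtain ⟨d, hd⟩ := Submodule.mem_one.1 hai
      have : (φ i).smulRight (a i) = (c * d) • pr F k := by
        ext1 x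
        rw [← hd, hc, Algebra.algebraMap_eq_smul_one]
        simp only [LinearMap.smulRight_apply, LinearMap.smul_apply, pr_apply, smul_smul,
          smul_eq_mul]
        congr 1
        ring
      rw [this]
      exact (innerDerivationsAlgebra F k).smul_mem (pr_mem hk) _
  refine Submodule.subset_span ⟨1, fun i => ⟨_, hu i⟩, ?_⟩
  refine MultilinearMap.ext fun x => ?_
  rw [rk_apply]
  have := (MultilinearMap.mkPiAlgebraFin F n (Matrix (Fin k) (Fin k) F)).map_smul_univ
    (fun i => φ i (x i)) a
  rw [MultilinearMap.mkPiAlgebraFin_apply a] at this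
  rw [← this]
  simp

/-- component of `f` -/
noncomputable def comp {n : ℕ} (f : MultilinearMap F (fun _ : Fin n => Matrix (Fin k) (Fin k) F)
      (Matrix (Fin k) (Fin k) F)) (T : Finset (Fin n)) :
    MultilinearMap F (fun _ : Fin n => Matrix (Fin k) (Fin k) F)
      (Matrix (Fin k) (Fin k) F) :=
  f.compLinearMap fun i => if i ∈ T then qr F k else pr F k

theorem sum_comp {n : ℕ} (f : MultilinearMap F (fun _ : Fin n => Matrix (Fin k) (Fin k) F)
      (Matrix (Fin k) (Fin k) F)) : f = ∑ T, comp f T := by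
  refine MultilinearMap.ext fun x => ?_
  have := f.map_add_univ (fun i => qr F k (x i)) (fun i => pr F k (x i))
  have hx : ((fun i => qr F k (x i)) + fun i => pr F k (x i)) = x := by
    funext i
    simp [qr]
  rw [hx] at this
  rw [this, MultilinearMap.sum_apply]
  refine Finset.sum_congr rfl fun T _ => ?_
  simp only [comp, MultilinearMap.compLinearMap_apply]
  congr 1
  funext i
  by_cases hi : i ∈ T <;> simp [hi]

theorem qr_qr [CharZero F] (hk : 2 ≤ k) (x : Matrix (Fin k) (Fin k) F) :
    qr F k (qr F k x) = qr F k x := qr_of_mem (mem_sl.2 (trace_qr hk x))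

theorem pr_pr [CharZero F] (hk : 2 ≤ k) (x : Matrix (Fin k) (Fin k) F) :
    pr F k (pr F k x) = pr F k x := by
  simp [pr_apply, tau_one hk]

theorem comp_mem [CharZero F] (hk : 2 ≤ k) {n : ℕ}
    (f : MultilinearMap F (fun _ : Fin n => Matrix (Fin k) (Fin k) F)
      (Matrix (Fin k) (Fin k) F)) (T : Finset (Fin n))
    (h : ∀ y, comp f T y ∈ sl F k ^ T.card) : comp f T ∈ diffMultilinearSpan F k n := by
  classical
  let b := Matrix.stdBasis F (Fin k) (Fin k)
  let π : Fin n → Module.End F (Matrix (Fin k) (Fin k) F) :=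
    fun i => if i ∈ T then qr F k else pr F k
  have key : comp f T = ∑ r : Fin n → (Fin k × Fin k),
      rk (fun i => (b.coord (r i)).comp (π i)) (comp f T fun i => b (r i)) := by
    refine MultilinearMap.ext fun x => ?_
    have e1 : comp f T x = comp f T fun i => π i (x i) := by
      simp only [comp, MultilinearMap.compLinearMap_apply]
      congr 1
      funext i
      by_cases hi : i ∈ T
      · simp [π, hi, qr_qr hk]
      · simp [π, hi, pr_pr hk]
    have e2 : (fun i => π i (x i)) = fun i => ∑ j, b.repr (π i (x i)) j • b j := by
      funext i
      rw [b.sum_repr]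
    rw [e1, e2, MultilinearMap.map_sum, MultilinearMap.sum_apply]
    refine Finset.sum_congr rfl fun r _ => ?_
    rw [rk_apply, MultilinearMap.map_smul_univ]
    simp
  rw [key]
  refine Submodule.sum_mem _ fun r _ => rk_mem hk T _ ?_ ?_ _ (h _)
  · intro i hi
    simp [π, hi, qr_one hk]
  · intro i hi
    refine ⟨b.coord (r i) 1, ?_⟩
    ext1 x
    simp [π, hi, pr_apply, mul_comm]

theorem comp_apply {n : ℕ} (f : MultilinearMap F (fun _ : Fin n => Matrix (Fin k) (Fin k) F)
      (Matrix (Fin k) (Fin k) F)) (T : Finset (Fin n)) (y : Fin n → Matrix (Fin k) (Fin k) F) :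
    ∃ c : F, comp f T y = c • f (fun i => if i ∈ T then qr F k (y i) else 1) := by
  refine ⟨∏ i, (if i ∈ T then 1 else tau F k (y i)), ?_⟩
  rw [← MultilinearMap.map_smul_univ]
  simp only [comp, MultilinearMap.compLinearMap_apply]
  congr 1
  funext i
  by_cases hi : i ∈ T
  · simp [hi]
  · simp [hi, pr_apply]

theorem mem_W [CharZero F] (hk : 2 ≤ k) {n : ℕ}
    (f : MultilinearMap F (fun _ : Fin n => Matrix (Fin k) (Fin k) F)
      (Matrix (Fin k) (Fin k) F))
    (h0 : f (fun _ => 1) ∈ (1 : Submodule F (Matrix (Fin k) (Fin k) F)))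
    (h1 : ∀ i, ∀ x ∈ sl F k, f (Function.update (fun _ => 1) i x) ∈ sl F k) :
    f ∈ diffMultilinearSpan F k n := by
  rw [sum_comp f]
  refine Submodule.sum_mem _ fun T _ => comp_mem hk f T fun y => ?_
  obtain ⟨c, hc⟩ := comp_apply f T y
  rw [hc]
  refine Submodule.smul_mem _ _ ?_
  rcases hT : T.card with _ | _ | s
  · rw [Finset.card_eq_zero] at hT
    subst hT
    simpa using h0
  · obtain ⟨i, rfl⟩ := Finset.card_eq_one.1 hT
    rw [zero_add, pow_one]
    convert h1 i (qr F k (y i)) (mem_sl.2 (trace_qr hk _)) using 2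
    funext j
    by_cases hj : j = i
    · subst hj; simp
    · simp [hj]
  · rw [sl_pow hk]; trivial

theorem W_prop {n : ℕ} {f : MultilinearMap F (fun _ : Fin n => Matrix (Fin k) (Fin k) F)
      (Matrix (Fin k) (Fin k) F)} (hf : f ∈ diffMultilinearSpan F k n) :
    f (fun _ => 1) ∈ (1 : Submodule F (Matrix (Fin k) (Fin k) F)) ∧
    ∀ i, ∀ x ∈ sl F k, f (Function.update (fun _ => 1) i x) ∈ sl F k := by
  induction hf using Submodule.span_induction with
  | zero => simp
  | add f g _ _ h1 h2 =>
    exact ⟨Submodule.add_mem _ h1.1 h2.1, fun i x hx =>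
      Submodule.add_mem _ (h1.2 i x hx) (h2.2 i x hx)⟩
  | smul c f _ h =>
    exact ⟨Submodule.smul_mem _ c h.1, fun i x hx => Submodule.smul_mem _ c (h.2 i x hx)⟩
  | mem f hf =>
    obtain ⟨σ, u, rfl⟩ := hf
    have key : ∀ (T : Finset (Fin n)) (x : Fin n → Matrix (Fin k) (Fin k) F),
        (∀ i ∈ T, x i ∈ sl F k) → (∀ i ∉ T, x i = 1) →
        (List.ofFn fun i => (u i : Module.End F (Matrix (Fin k) (Fin k) F)) (x i)).prod
          ∈ sl F k ^ T.card := by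
      intro T x h1 h2
      rw [← prodV]
      refine prod_ofFn_mem _ _ fun i => ?_
      by_cases hi : i ∈ T
      · rw [if_pos hi, pow_one]
        exact (U_prop (u i).2).2 _ (h1 i hi)
      · rw [if_neg hi, pow_zero, h2 i hi]
        exact (U_prop (u i).2).1
    refine ⟨?_, fun i x hx => ?_⟩
    · simpa using key ∅ (fun _ => 1) (by simp) (by simp)
    · have := key {σ.symm i} (fun j => Function.update (fun _ => (1 : Matrix (Fin k) (Fin k) F)) i x (σ j))
        (by simpa using hx)
        (fun j hj => by
          have : σ j ≠ i := by
            rintro rfl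
            simp at hj
          simp [this])
      simpa using this

theorem finrank_sl [CharZero F] (hk : 2 ≤ k) : Module.finrank F (sl F k) = k ^ 2 - 1 := by
  have h := LinearMap.finrank_range_add_finrank_ker (Matrix.traceLinearMap (Fin k) F F)
  have hs : LinearMap.range (Matrix.traceLinearMap (Fin k) F F) = ⊤ := by
    have : Nonempty (Fin k) := ⟨⟨0, by omega⟩⟩
    rw [LinearMap.range_eq_top]
    exact Matrix.trace_surjective
  rw [hs, finrank_top, Module.finrank_self, Module.finrank_matrix] at h
  simp only [Fintype.card_fin, Module.finrank_self, mul_one] at h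
  change 1 + Module.finrank F (sl F k) = _ at h
  rw [pow_two]
  omega

/-- The obstruction map. -/
noncomputable def obs [CharZero F] (hk : 2 ≤ k) (n : ℕ) :
    MultilinearMap F (fun _ : Fin n => Matrix (Fin k) (Fin k) F) (Matrix (Fin k) (Fin k) F) →ₗ[F]
      (sl F k) × (Fin n → Module.Dual F (sl F k)) where
  toFun f := (⟨qr F k (f fun _ => 1), mem_sl.2 (trace_qr hk _)⟩, fun i =>
    (Matrix.traceLinearMap (Fin k) F F).comp
      ((f.toLinearMap (fun _ => 1) i).comp (sl F k).subtype))
  map_add' f g := by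
    ext <;> simp
  map_smul' c f := by
    ext <;> simp

theorem ker_obs [CharZero F] (hk : 2 ≤ k) (n : ℕ) :
    LinearMap.ker (obs (F := F) hk n) = diffMultilinearSpan F k n := by
  ext f
  have : f ∈ LinearMap.ker (obs hk n) ↔
      f (fun _ => 1) ∈ (1 : Submodule F (Matrix (Fin k) (Fin k) F)) ∧
      ∀ i, ∀ x ∈ sl F k, f (Function.update (fun _ => 1) i x) ∈ sl F k := by
    rw [LinearMap.mem_ker]
    simp only [obs, LinearMap.coe_mk, AddHom.coe_mk, Prod.mk_eq_zero]
    refine and_congr ?_ ?_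
    · rw [← Subtype.coe_inj]
      simp only [ZeroMemClass.coe_zero]
      constructor
      · intro h
        rw [qr_apply, sub_eq_zero] at h
        rw [h]
        exact Submodule.smul_mem _ _ (Submodule.one_le.1 le_rfl)
      · intro h
        obtain ⟨c, hc⟩ := Submodule.mem_one.1 h
        rw [← hc, Algebra.algebraMap_eq_smul_one, map_smul, qr_one hk, smul_zero]
    · rw [funext_iff]
      refine forall_congr' fun i => ?_
      rw [LinearMap.ext_iff]
      simp [mem_sl]
  rw [this]
  exact ⟨fun h => mem_W hk f h.1 h.2, W_prop⟩

theorem obs_surj [CharZero F] (hk : 2 ≤ k) (n : ℕ) :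
    Function.Surjective (obs (F := F) hk n) := by
  have hk0 : (k : F) ≠ 0 := by exact_mod_cast (by omega : k ≠ 0)
  rintro ⟨s, ψ⟩
  let Q : Matrix (Fin k) (Fin k) F →ₗ[F] sl F k :=
    (qr F k).codRestrict _ fun x => mem_sl.2 (trace_qr hk x)
  have hQ1 : Q 1 = 0 := by
    apply Subtype.ext
    simp [Q, qr_one hk]
  have hQ : ∀ x : sl F k, Q x = x := by
    intro x
    apply Subtype.ext
    simp [Q, qr_of_mem x.2]
  let φ : Fin n → Fin n → Matrix (Fin k) (Fin k) F →ₗ[F] F :=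
    fun i => Function.update (fun _ => tau F k) i ((ψ i).comp Q)
  refine ⟨rk (fun _ => tau F k) s + ∑ i, rk (φ i) ((k : F)⁻¹ • 1), ?_⟩
  have hφ1 : ∀ i, ∏ j, φ i j 1 = 0 := fun i =>
    Finset.prod_eq_zero (Finset.mem_univ i) (by simp [φ, hQ1])
  have hφne : ∀ i j, j ≠ i → ∀ x : Matrix (Fin k) (Fin k) F,
      ∏ l, φ j l (Function.update (fun _ => (1 : Matrix (Fin k) (Fin k) F)) i x l) = 0 := fun i j hj x =>
    Finset.prod_eq_zero (Finset.mem_univ j) (by simp [φ, hQ1, hj])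
  have hφ : ∀ i, ∀ x : sl F k,
      ∏ l, φ i l (Function.update (fun _ => (1 : Matrix (Fin k) (Fin k) F)) i (x : Matrix (Fin k) (Fin k) F) l) = ψ i x := by
    intro i x
    rw [Finset.prod_eq_single i]
    · simp [φ, hQ]
    · intro b _ hb
      simp [φ, hb, tau_one hk]
    · simp
  have hτ : ∀ i, ∀ x : sl F k,
      ∏ l, tau F k (Function.update (fun _ : Fin n => (1 : Matrix (Fin k) (Fin k) F)) i x l)
        = 0 := fun i x =>
    Finset.prod_eq_zero (Finset.mem_univ i) (by simp [tau_of_mem x.2])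
  simp only [obs, LinearMap.coe_mk, AddHom.coe_mk]
  refine Prod.ext ?_ ?_
  · apply Subtype.ext
    simp [MultilinearMap.sum_apply, rk_apply, hφ1, tau_one hk, qr_of_mem s.2]
  · funext i
    ext1 x
    simp only [LinearMap.comp_apply, MultilinearMap.toLinearMap_apply, Submodule.subtype_apply,
      MultilinearMap.add_apply, MultilinearMap.sum_apply, rk_apply, hτ, zero_smul, zero_add]
    rw [Finset.sum_eq_single i (fun j _ hj => by rw [hφne i j hj, zero_smul]) (by simp), hφ]
    simp [hk0]

theorem finrank_multi (n : ℕ) : Module.finrank F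
    (MultilinearMap F (fun _ : Fin n => Matrix (Fin k) (Fin k) F) (Matrix (Fin k) (Fin k) F))
      = k ^ (2 * (n + 1)) := by
  rw [Module.finrank_eq_card_basis (Basis.multilinearMap
    (fun _ : Fin n => Matrix.stdBasis F (Fin k) (Fin k)) (Matrix.stdBasis F (Fin k) (Fin k)))]
  simp
  ring

theorem main [CharZero F] (hk : 2 ≤ k) (n : ℕ) :
    Module.finrank F (diffMultilinearSpan F k n)
      = k ^ (2 * (n + 1)) - (k ^ 2 - 1) * (n + 1) := by
  have h := LinearMap.finrank_range_add_finrank_ker (obs (F := F) hk n)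
  rw [LinearMap.range_eq_top.2 (obs_surj hk n), finrank_top, ker_obs, finrank_multi,
    Module.finrank_prod, Module.finrank_pi_fintype] at h
  simp only [Subspace.dual_finrank_eq, finrank_sl hk, Finset.sum_const, Finset.card_univ,
    Fintype.card_fin, smul_eq_mul] at h
  rw [← h, mul_add, mul_one, mul_comm n]
  omega

end DiffCodim

/-- Let `F` be a field of characteristic zero and `k ≥ 2`.  For every
`n ≥ 1`, the `n`-th differential codimension of `M_k(F)` under the action of the Lie algebra
of all its derivations equals `k^{2(n+1)} − (k² − 1)(n + 1)`. -/
theorem differential_codimension_of_matrix_algebra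
    (F : Type*) [Field F] [CharZero F] (k : ℕ) (hk : 2 ≤ k) (n : ℕ) (hn : 1 ≤ n) :
    Module.finrank F (diffMultilinearSpan F k n)
      = k ^ (2 * (n + 1)) - (k ^ 2 - 1) * (n + 1) := by
  exact DiffCodim.main hk n
end

section
/- Let F be a field of characteristic zero and k ≥ 2. The differential PI-exponent of M_k(F) with respect to the Lie algebra of all its derivations equals k²: the limit as n → ∞ of the n-th root of c_n^L(M_k(F)) = k^{2(n+1)} − (k² − 1)(n + 1) exists and equals k². -/
open Matrix

namespace DiffExp

/-- trace zero matrices -/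
noncomputable def sl (F : Type*) [Field F] (k : ℕ) : Submodule F (Matrix (Fin k) (Fin k) F) :=
  LinearMap.ker (Matrix.traceLinearMap (Fin k) F F)

theorem mem_sl {F : Type*} [Field F] {k : ℕ} {x : Matrix (Fin k) (Fin k) F} :
    x ∈ sl F k ↔ x.trace = 0 := by
  simp [sl]

/-- ad-stable submodules containing an off-diagonal matrix unit contain `sl`. -/
theorem sl_le_of_stable {F : Type*} [Field F] [CharZero F] {k : ℕ}
    (N : Submodule F (Matrix (Fin k) (Fin k) F))
    (hN : ∀ a x, x ∈ N → a * x - x * a ∈ N)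
    {i j : Fin k} (hij : i ≠ j) (h : single i j (1 : F) ∈ N) : sl F k ≤ N := by
  have flip : ∀ i j : Fin k, i ≠ j → single i j (1 : F) ∈ N → single j i (1 : F) ∈ N := by
    intro i j hij h
    have h2 := hN (single j i 1) _ (hN (single j i 1) _ h)
    have : (-2 : F) • single j i (1 : F) ∈ N := by
      convert h2 using 1
      simp only [mul_sub, sub_mul, single_mul_single_same, mul_one,
        single_mul_single_of_ne _ _ _ _ hij, single_mul_single_of_ne _ _ _ _ hij.symm]
      module
    exact (N.smul_mem_iff (by norm_num)).1 this
  have row : ∀ i j a : Fin k, i ≠ j → a ≠ j → single i j (1 : F) ∈ N →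
      single a j (1 : F) ∈ N := by
    intro i j a hij haj h
    have := hN (single a i 1) _ h
    simpa [single_mul_single_of_ne _ _ _ _ haj.symm] using this
  have col : ∀ i j b : Fin k, i ≠ j → i ≠ b → single i j (1 : F) ∈ N →
      single i b (1 : F) ∈ N := by
    intro i j b hij hib h
    have := hN (single j b 1) _ h
    rw [single_mul_single_of_ne _ _ _ _ hib.symm, single_mul_single_same] at this
    simpa using this
  have off : ∀ a b : Fin k, a ≠ b → single a b (1 : F) ∈ N := by
    intro a b hab
    by_cases haj : a = j
    · subst haj
      exact col _ _ _ hij.symm hab (flip _ _ hij h)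
    · exact col _ _ _ haj hab (row _ _ _ hij haj h)
  have dia : ∀ a b : Fin k, single a a (1 : F) - single b b 1 ∈ N := by
    intro a b
    by_cases hab : a = b
    · subst hab; simp
    · have := hN (single a b 1) _ (off b a (Ne.symm hab))
      simpa using this
  intro x hx
  rw [mem_sl] at hx
  have key : x = ∑ a, ∑ b, x a b • (single a b (1 : F) - if a = b then single i i 1 else 0) := by
    have h1 : ∑ a, ∑ b, x a b • (single a b (1 : F) - if a = b then single i i 1 else 0)
      = ∑ a, ∑ b, single a b (x a b) - x.trace • single i i 1 := by
      simp only [smul_sub, Finset.sum_sub_distrib, smul_single, smul_eq_mul, mul_one, smul_ite,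
        smul_zero, Finset.sum_ite_eq, Finset.mem_univ, if_true]
      congr 1
      simp [Matrix.trace, Finset.sum_smul, smul_single]
      ext p q
      simp [Matrix.sum_apply, single_apply]
    rw [h1, hx, zero_smul, sub_zero]
    exact matrix_eq_sum_single x
  rw [key]
  refine N.sum_mem fun a _ => N.sum_mem fun b _ => N.smul_mem _ ?_
  split_ifs with hab
  · subst hab; exact dia _ _
  · simpa using off _ _ hab

variable {F : Type*} [Field F] {k : ℕ}

theorem ad_mem (a : Matrix (Fin k) (Fin k) F) :
    LinearMap.mulLeft F a - LinearMap.mulRight F a ∈ innerDerivationsAlgebra F k :=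
  Algebra.subset_adjoin ⟨a, rfl⟩

/-- the functional `x ↦ tr (y x)`. -/
noncomputable def phi : Matrix (Fin k) (Fin k) F →ₗ[F] Matrix (Fin k) (Fin k) F →ₗ[F] F :=
  (LinearMap.mul F (Matrix (Fin k) (Fin k) F)).compr₂ (Matrix.traceLinearMap (Fin k) F F)

@[simp] theorem phi_apply (y x : Matrix (Fin k) (Fin k) F) : phi y x = (y * x).trace := by
  simp [phi]

theorem phi_smulRight_mem [CharZero F] (hk : 2 ≤ k) {y a : Matrix (Fin k) (Fin k) F}
    (hy : y ∈ sl F k) (ha : a ∈ sl F k) :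
    (phi y).smulRight a ∈ innerDerivationsAlgebra F k := by
  let i : Fin k := ⟨0, by omega⟩
  let j : Fin k := ⟨1, by omega⟩
  have hij : i ≠ j := by simp [i, j]
  have base : (phi (single i j (1 : F))).smulRight (single i j 1)
      ∈ innerDerivationsAlgebra F k := by
    have h := mul_mem (ad_mem (single i j (1 : F))) (ad_mem (single i j (1 : F)))
    have h2 := (innerDerivationsAlgebra F k).smul_mem h (-2 : F)⁻¹
    convert h2 using 1
    refine LinearMap.ext fun x => ?_
    have e1 : single i j (1 : F) * (single i j 1 * x) = 0 := by
      rw [← mul_assoc, single_mul_single_of_ne _ _ _ _ hij.symm, zero_mul]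
    have e2 : x * single i j (1 : F) * single i j 1 = 0 := by
      rw [mul_assoc, single_mul_single_of_ne _ _ _ _ hij.symm, mul_zero]
    have e3 : single i j (1 : F) * (x * single i j 1) = x j i • single i j 1 := by
      ext p q
      simp [← mul_assoc, single_apply]
    have e4 : single i j (1 : F) * x * single i j 1 = x j i • single i j 1 := by
      rw [mul_assoc, e3]
    simp only [LinearMap.smulRight_apply, phi_apply, trace_single_mul, LinearMap.smul_apply,
      Module.End.mul_apply, LinearMap.sub_apply, LinearMap.mulLeft_apply, LinearMap.mulRight_apply,
      mul_sub, sub_mul, e1, e2, e3, e4]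
    have : (2 : F) ≠ 0 := by norm_num
    simp only [one_smul]
    match_scalars
    field_simp
    norm_num
  -- vary the vector
  have step1 : ∀ a ∈ sl F k, (phi (single i j (1 : F))).smulRight a
      ∈ innerDerivationsAlgebra F k := by
    intro a ha
    let N : Submodule F (Matrix (Fin k) (Fin k) F) :=
      (Subalgebra.toSubmodule (innerDerivationsAlgebra F k)).comap
        (LinearMap.smulRightₗ (phi (single i j (1 : F))))
    have : sl F k ≤ N := by
      refine sl_le_of_stable N ?_ hij ?_
      · intro c x hx
        have h := mul_mem (ad_mem c) (show _ ∈ innerDerivationsAlgebra F k from hx)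
        show _ ∈ innerDerivationsAlgebra F k
        convert h using 1
        refine LinearMap.ext fun z => ?_
        simp [smul_sub]
      · exact base
    exact this ha
  let N : Submodule F (Matrix (Fin k) (Fin k) F) :=
      (Subalgebra.toSubmodule (innerDerivationsAlgebra F k)).comap
        ((LinearMap.smulRightₗ.flip a) ∘ₗ phi)
  have : sl F k ≤ N := by
    refine sl_le_of_stable N ?_ hij ?_
    · intro c x hx
      have h := mul_mem (show _ ∈ innerDerivationsAlgebra F k from hx) (neg_mem (ad_mem c))
      show _ ∈ innerDerivationsAlgebra F k
      convert h using 1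
      refine LinearMap.ext fun z => ?_
      simp [mul_sub, sub_mul, mul_assoc]
      have : (c * (x * z)).trace = (x * (z * c)).trace := by
        rw [Matrix.trace_mul_comm, mul_assoc]
      rw [this]
    · exact step1 a ha
  exact this hy

theorem exists_phi (f : Matrix (Fin k) (Fin k) F →ₗ[F] F) : ∃ y, f = phi y := by
  refine ⟨Matrix.of fun i j => f (single j i 1), ?_⟩
  refine Matrix.ext_linearMap _ fun i j => ?_
  ext
  simp [trace_mul_single]

theorem smulRight_mem [CharZero F] (hk : 2 ≤ k) {f : Matrix (Fin k) (Fin k) F →ₗ[F] F}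
    (hf : f 1 = 0) {a : Matrix (Fin k) (Fin k) F} (ha : a ∈ sl F k) :
    f.smulRight a ∈ innerDerivationsAlgebra F k := by
  obtain ⟨y, rfl⟩ := exists_phi f
  refine phi_smulRight_mem hk ?_ ha
  simpa [mem_sl] using hf

/-- elements of `U` preserve scalars and `sl`. -/
theorem preserves {u : Module.End F (Matrix (Fin k) (Fin k) F)}
    (hu : u ∈ innerDerivationsAlgebra F k) :
    (∀ x ∈ (1 : Submodule F (Matrix (Fin k) (Fin k) F)),
      u x ∈ (1 : Submodule F (Matrix (Fin k) (Fin k) F))) ∧ ∀ x ∈ sl F k, u x ∈ sl F k := by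
  induction hu using Algebra.adjoin_induction with
  | mem u h =>
    obtain ⟨a, rfl⟩ := h
    refine ⟨fun x hx => ?_, fun x hx => ?_⟩
    · obtain ⟨r, rfl⟩ := Submodule.mem_one.1 hx
      have : (LinearMap.mulLeft F a - LinearMap.mulRight F a)
          (algebraMap F (Matrix (Fin k) (Fin k) F) r) = 0 := by
        simp [Algebra.commutes r a]
      simp only [this, Submodule.zero_mem]
    · simp [mem_sl, Matrix.trace_sub, Matrix.trace_mul_comm a x]
  | algebraMap r =>
    refine ⟨fun x hx => ?_, fun x hx => ?_⟩
    · exact Submodule.smul_mem _ r hx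
    · exact Submodule.smul_mem _ r hx
  | add u v _ _ h1 h2 =>
    exact ⟨fun x hx => add_mem (h1.1 x hx) (h2.1 x hx), fun x hx => add_mem (h1.2 x hx) (h2.2 x hx)⟩
  | mul u v _ _ h1 h2 =>
    exact ⟨fun x hx => h1.1 _ (h2.1 x hx), fun x hx => h1.2 _ (h2.2 x hx)⟩

theorem sl_mul_sl (hk : 2 ≤ k) : sl F k * sl F k = ⊤ := by
  rw [eq_top_iff]
  intro x _
  rw [matrix_eq_sum_single x]
  refine Submodule.sum_mem _ fun i _ => Submodule.sum_mem _ fun j _ => ?_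
  rw [show single i j (x i j) = x i j • single i j (1 : F) by simp [smul_single]]
  refine Submodule.smul_mem _ _ ?_
  by_cases h : i = j
  · subst h
    have : Nontrivial (Fin k) := Fin.nontrivial_iff_two_le.2 hk
    obtain ⟨j, hj⟩ := exists_ne i
    have : single i i (1 : F) = single i j 1 * single j i 1 := by simp
    rw [this]
    exact Submodule.mul_mem_mul (mem_sl.2 (trace_single_eq_of_ne _ _ _ hj.symm))
      (mem_sl.2 (trace_single_eq_of_ne _ _ _ hj))
  · have : single i j (1 : F) = (single i i 1 - single j j 1) * single i j 1 := by
      rw [sub_mul, single_mul_single_same, single_mul_single_of_ne _ _ _ _ (Ne.symm h)]; simp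
    rw [this]
    exact Submodule.mul_mem_mul (mem_sl.2 (by simp [trace_sub]))
      (mem_sl.2 (trace_single_eq_of_ne _ _ _ h))

theorem sl_pow (hk : 2 ≤ k) (s : ℕ) : sl F k ^ (s + 2) = ⊤ := by
  induction s with
  | zero => rw [zero_add, pow_two, sl_mul_sl hk]
  | succ s ih =>
    rw [show s + 1 + 2 = (s + 2) + 1 from rfl, pow_succ, ih, eq_top_iff]
    conv_lhs => rw [← sl_mul_sl hk]
    exact mul_le_mul_left le_top _

/-- splitting off the scalars -/
noncomputable def splitEquiv [CharZero F] (hk : 2 ≤ k) :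
    (F × sl F k) ≃ₗ[F] Matrix (Fin k) (Fin k) F :=
  LinearEquiv.ofBijective
    (LinearMap.coprod (LinearMap.toSpanSingleton F _ 1) (sl F k).subtype) (by
      have hk0 : (k : F) ≠ 0 := by exact_mod_cast (by omega : k ≠ 0)
      constructor
      · rw [← LinearMap.ker_eq_bot, LinearMap.ker_eq_bot']
        rintro ⟨r, s, hs⟩ h
        simp only [LinearMap.coprod_apply, LinearMap.toSpanSingleton_apply,
          Submodule.subtype_apply] at h
        have ht := congrArg Matrix.trace h
        rw [mem_sl] at hs
        simp [hs, hk0] at ht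
        subst ht
        simpa using h
      · intro x
        refine ⟨(x.trace / k, ⟨x - (x.trace / k) • 1, ?_⟩), ?_⟩
        · rw [mem_sl]; simp [hk0]
        · simp)

theorem splitEquiv_apply [CharZero F] (hk : 2 ≤ k) (p : F × sl F k) :
    splitEquiv hk p = p.1 • 1 + (p.2 : Matrix (Fin k) (Fin k) F) := rfl

theorem finrank_sl [CharZero F] (hk : 2 ≤ k) : Module.finrank F (sl F k) = k ^ 2 - 1 := by
  have h := (splitEquiv (F := F) hk).finrank_eq
  simp [Module.finrank_prod, Module.finrank_matrix] at h
  rw [pow_two]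
  omega

theorem exists_basis [CharZero F] (hk : 2 ≤ k) :
    ∃ b : Module.Basis (Unit ⊕ Fin (k ^ 2 - 1)) F (Matrix (Fin k) (Fin k) F),
      b (Sum.inl ()) = 1 ∧ ∀ j, b (Sum.inr j) ∈ sl F k := by
  refine ⟨((Module.Basis.singleton Unit F).prod
    (Module.finBasisOfFinrankEq F (sl F k) (finrank_sl hk))).map (splitEquiv hk), ?_, ?_⟩
  · simp [splitEquiv_apply]
  · intro j
    simp [splitEquiv_apply]

/-- weight of a basis index -/
def wt {J : Type*} : Unit ⊕ J → ℕ := Sum.elim (fun _ => 0) (fun _ => 1)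

theorem ofFn_prod_pow {R : Type*} [Monoid R] (x : R) : ∀ {n : ℕ} (w : Fin n → ℕ),
    (List.ofFn fun i => x ^ w i).prod = x ^ ∑ i, w i
  | 0, w => by simp
  | n + 1, w => by
    rw [List.ofFn_succ, List.prod_cons, ofFn_prod_pow x (fun i => w i.succ), Fin.sum_univ_succ,
      pow_add]

theorem ofFn_prod_mem {A : Type*} [Ring A] [Algebra F A] : ∀ {n : ℕ} (P : Fin n → Submodule F A)
    (c : Fin n → A), (∀ i, c i ∈ P i) → (List.ofFn c).prod ∈ (List.ofFn P).prod
  | 0, P, c, h => by simpa using Submodule.mem_one.2 ⟨1, by simp⟩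
  | n + 1, P, c, h => by
    rw [List.ofFn_succ, List.ofFn_succ, List.prod_cons, List.prod_cons]
    exact Submodule.mul_mem_mul (h 0) (ofFn_prod_mem _ _ fun i => h i.succ)

theorem ofFn_prod_le {A : Type*} [Ring A] [Algebra F A] : ∀ {n : ℕ} (P : Fin n → Submodule F A),
    (List.ofFn P).prod ≤
      Submodule.span F {m | ∃ c : Fin n → A, (∀ i, c i ∈ P i) ∧ m = (List.ofFn c).prod}
  | 0, P => by
    simp only [List.ofFn_zero, List.prod_nil]
    rw [Submodule.one_le]
    exact Submodule.subset_span ⟨Fin.elim0, fun i => i.elim0, by simp⟩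
  | n + 1, P => by
    rw [List.ofFn_succ, List.prod_cons]
    refine (mul_le_mul_right (ofFn_prod_le fun i => P i.succ) (P 0)).trans ?_
    rw [Submodule.mul_le]
    intro a ha x hx
    induction hx using Submodule.span_induction with
    | mem x h =>
      obtain ⟨c, hc, rfl⟩ := h
      refine Submodule.subset_span ⟨Fin.cons a c, fun i => ?_, ?_⟩
      · refine Fin.cases ?_ (fun i => ?_) i
        · simpa using ha
        · simpa using hc i
      · simp [List.ofFn_succ]
    | zero => simp
    | add x y _ _ h1 h2 => rw [mul_add]; exact add_mem h1 h2
    | smul r x _ h => rw [mul_smul_comm]; exact Submodule.smul_mem _ _ h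

section main

variable [CharZero F] {J : Type*} [Fintype J] [DecidableEq J]
  (b : Module.Basis (Unit ⊕ J) F (Matrix (Fin k) (Fin k) F))

theorem coord_mem (hk : 2 ≤ k) (h1 : b (Sum.inl ()) = 1) (h2 : ∀ j, b (Sum.inr j) ∈ sl F k)
    (i : Unit ⊕ J) {c : Matrix (Fin k) (Fin k) F} (hc : c ∈ sl F k ^ wt i) :
    (b.coord i).smulRight c ∈ innerDerivationsAlgebra F k := by
  have hr : ∀ (j : J) {c : Matrix (Fin k) (Fin k) F}, c ∈ sl F k →
      (b.coord (Sum.inr j)).smulRight c ∈ innerDerivationsAlgebra F k := by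
    intro j c hc
    refine smulRight_mem hk ?_ hc
    rw [← h1]
    simp
  rcases i with ⟨⟩ | j
  · simp only [wt, Sum.elim_inl, pow_zero] at hc
    obtain ⟨r, rfl⟩ := Submodule.mem_one.1 hc
    have h : (b.coord (Sum.inl ())).smulRight (algebraMap F (Matrix (Fin k) (Fin k) F) r)
        = r • (1 - ∑ j, (b.coord (Sum.inr j)).smulRight (b (Sum.inr j))) := by
      refine LinearMap.ext fun x => ?_
      have hx := b.sum_repr x
      rw [Fintype.sum_sum_type] at hx
      simp only [Finset.univ_unique, Finset.sum_singleton, PUnit.default_eq_unit, h1] at hx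
      simp only [LinearMap.smulRight_apply, LinearMap.smul_apply, LinearMap.sub_apply,
        Module.End.one_apply, LinearMap.sum_apply, Module.Basis.coord_apply]
      rw [sub_eq_of_eq_add hx.symm]
      rw [Algebra.algebraMap_eq_smul_one, smul_comm]
    refine Set.mem_of_eq_of_mem h ?_
    exact (innerDerivationsAlgebra F k).smul_mem
      (sub_mem (one_mem _) (sum_mem fun j _ => hr j (h2 j))) r
  · simp only [wt, Sum.elim_inr, pow_one] at hc
    exact hr j hc

theorem basis_mem (h1 : b (Sum.inl ()) = 1) (h2 : ∀ j, b (Sum.inr j) ∈ sl F k)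
    (i : Unit ⊕ J) : b i ∈ sl F k ^ wt i := by
  rcases i with ⟨⟩ | j
  · simp only [wt, Sum.elim_inl, pow_zero, h1]
    exact Submodule.mem_one.2 ⟨1, by simp⟩
  · simpa [wt] using h2 j

theorem preserves_wt {u : Module.End F (Matrix (Fin k) (Fin k) F)}
    (hu : u ∈ innerDerivationsAlgebra F k) (i : Unit ⊕ J) {x : Matrix (Fin k) (Fin k) F}
    (hx : x ∈ sl F k ^ wt i) : u x ∈ sl F k ^ wt i := by
  rcases i with ⟨⟩ | j
  · simp only [wt, Sum.elim_inl, pow_zero] at hx ⊢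
    exact (preserves hu).1 x hx
  · simp only [wt, Sum.elim_inr, pow_one] at hx ⊢
    exact (preserves hu).2 x hx

/-- elementary multilinear maps -/
noncomputable def T {n : ℕ} (v : Fin n → Unit ⊕ J) :
    Matrix (Fin k) (Fin k) F →ₗ[F] MultilinearMap F (fun _ : Fin n => Matrix (Fin k) (Fin k) F)
      (Matrix (Fin k) (Fin k) F) where
  toFun m := ((MultilinearMap.mkPiAlgebra F (Fin n) F).compLinearMap
    fun i => b.coord (v i)).smulRight m
  map_add' x y := MultilinearMap.ext fun z => smul_add (∏ i, b.coord (v i) (z i)) x y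
  map_smul' r x := MultilinearMap.ext fun z => smul_comm (∏ i, b.coord (v i) (z i)) r x

theorem T_apply {n : ℕ} (v : Fin n → Unit ⊕ J) (m : Matrix (Fin k) (Fin k) F)
    (x : Fin n → Matrix (Fin k) (Fin k) F) :
    T b v m x = (∏ i, b.coord (v i) (x i)) • m := by
  rfl

theorem T_apply_basis {n : ℕ} (v v' : Fin n → Unit ⊕ J) (m : Matrix (Fin k) (Fin k) F) :
    T b v m (fun i => b (v' i)) = if v' = v then m else 0 := by
  rw [T_apply]
  split_ifs with h
  · subst h; simp
  · obtain ⟨i, hi⟩ := Function.ne_iff.1 h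
    rw [Finset.prod_eq_zero (Finset.mem_univ i), zero_smul]
    simp [Finsupp.single_apply, hi]

theorem T_mem (hk : 2 ≤ k) (h1 : b (Sum.inl ()) = 1) (h2 : ∀ j, b (Sum.inr j) ∈ sl F k)
    {n : ℕ} (v : Fin n → Unit ⊕ J) {m : Matrix (Fin k) (Fin k) F}
    (hm : m ∈ sl F k ^ ∑ i, wt (v i)) : T b v m ∈ diffMultilinearSpan F k n := by
  have h : sl F k ^ ∑ i, wt (v i) ≤ (diffMultilinearSpan F k n).comap (T b v) := by
    rw [← ofFn_prod_pow]
    refine (ofFn_prod_le _).trans ?_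
    rw [Submodule.span_le]
    rintro _ ⟨c, hc, rfl⟩
    refine Submodule.subset_span ⟨1, fun i => ⟨_, coord_mem b hk h1 h2 (v i) (hc i)⟩, ?_⟩
    refine MultilinearMap.ext fun x => ?_
    rw [T_apply]
    have := MultilinearMap.map_smul_univ
      (MultilinearMap.mkPiAlgebraFin F n (Matrix (Fin k) (Fin k) F))
      (fun i => b.coord (v i) (x i)) c
    simp only [MultilinearMap.mkPiAlgebraFin_apply] at this
    rw [← this]
    simp
  exact h hm

theorem mem_iff (hk : 2 ≤ k) (h1 : b (Sum.inl ()) = 1) (h2 : ∀ j, b (Sum.inr j) ∈ sl F k)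
    {n : ℕ} (f : MultilinearMap F (fun _ : Fin n => Matrix (Fin k) (Fin k) F)
      (Matrix (Fin k) (Fin k) F)) :
    f ∈ diffMultilinearSpan F k n ↔
      ∀ v : Fin n → Unit ⊕ J, f (fun i => b (v i)) ∈ sl F k ^ ∑ i, wt (v i) := by
  constructor
  · intro hf v
    induction hf using Submodule.span_induction with
    | mem f h =>
      obtain ⟨σ, u, rfl⟩ := h
      simp only [MultilinearMap.domDomCongr_apply, MultilinearMap.compLinearMap_apply,
        MultilinearMap.mkPiAlgebraFin_apply]
      rw [← Equiv.sum_comp σ, ← ofFn_prod_pow]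
      exact ofFn_prod_mem _ _ fun i =>
        preserves_wt (u i).2 (v (σ i)) (basis_mem b h1 h2 _)
    | zero => simp
    | add x y _ _ hx hy => exact add_mem hx hy
    | smul r x _ hx => exact Submodule.smul_mem _ _ hx
  · intro h
    have : f = ∑ v : Fin n → Unit ⊕ J, T b v (f fun i => b (v i)) := by
      refine Module.Basis.ext_multilinear (fun _ => b) fun v => ?_
      simp [T_apply_basis]
    rw [this]
    exact Submodule.sum_mem _ fun v _ => T_mem b hk h1 h2 v (h v)

/-- `W` is a product. -/
noncomputable def spanEquiv (hk : 2 ≤ k) (h1 : b (Sum.inl ()) = 1)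
    (h2 : ∀ j, b (Sum.inr j) ∈ sl F k) (n : ℕ) :
    diffMultilinearSpan F k n ≃ₗ[F]
      ((v : Fin n → Unit ⊕ J) → (sl F k ^ ∑ i, wt (v i) : Submodule F _)) where
  toFun f v := ⟨f.1 fun i => b (v i), (mem_iff b hk h1 h2 f.1).1 f.2 v⟩
  map_add' f g := rfl
  map_smul' r f := rfl
  invFun g := ⟨∑ v, T b v (g v).1, Submodule.sum_mem _ fun v _ => T_mem b hk h1 h2 v (g v).2⟩
  left_inv f := by
    refine Subtype.ext (Module.Basis.ext_multilinear (fun _ => b) fun v => ?_)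
    simp [T_apply_basis]
  right_inv g := by
    funext v
    refine Subtype.ext ?_
    simp [T_apply_basis]

end main

theorem count {J : Type*} [Fintype J] [DecidableEq J] : ∀ (n : ℕ) (h : ℕ → ℕ),
    (∀ s, h (s + 2) = 0) →
    ∑ v : Fin n → Unit ⊕ J, h (∑ i, wt (v i)) = h 0 + n * Fintype.card J * h 1
  | 0, h, _ => by simp
  | n + 1, h, hh => by
    rw [← (Fin.consEquiv fun _ => Unit ⊕ J).sum_comp, Fintype.sum_prod_type]
    simp only [Fin.consEquiv_apply, Fin.sum_univ_succ, Fin.cons_zero, Fin.cons_succ,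
      Fintype.sum_sum_type]
    simp only [wt, Sum.elim_inl, Sum.elim_inr, zero_add,
      Finset.sum_const, Finset.card_univ, smul_eq_mul, Fintype.card_unit, one_mul]
    have e1 := count (J := J) n h hh
    have e2 := count (J := J) n (fun s => h (1 + s)) (fun s => by
      show h (1 + (s + 2)) = 0
      rw [show 1 + (s + 2) = (s + 1) + 2 by ring]; exact hh _)
    simp only [wt] at e1 e2
    rw [e1, e2, show 1 + 1 = 0 + 2 from rfl, hh]
    ring

theorem finrank_pow [CharZero F] (hk : 2 ≤ k) (s : ℕ) :
    Module.finrank F (sl F k ^ s : Submodule F (Matrix (Fin k) (Fin k) F))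
      + (match s with | 0 => k ^ 2 - 1 | 1 => 1 | _ => 0) = k ^ 2 := by
  have hk2 : 1 ≤ k ^ 2 := Nat.one_le_pow _ _ (by omega)
  match s with
  | 0 =>
    have : Nonempty (Fin k) := ⟨⟨0, by omega⟩⟩
    rw [pow_zero, Submodule.one_eq_span, finrank_span_singleton one_ne_zero]
    exact Nat.add_sub_cancel' hk2
  | 1 => rw [pow_one, finrank_sl hk]; simp only; omega
  | s + 2 => rw [sl_pow hk, finrank_top]; simp [Module.finrank_matrix, pow_two]

theorem codim_add [CharZero F] (hk : 2 ≤ k) (n : ℕ) :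
    Module.finrank F (diffMultilinearSpan F k n) + (k ^ 2 - 1) * (n + 1) = k ^ (2 * (n + 1)) := by
  obtain ⟨b, h1, h2⟩ := exists_basis (F := F) hk
  have hk2 : 1 ≤ k ^ 2 := Nat.one_le_pow _ _ (by omega)
  rw [(spanEquiv b hk h1 h2 n).finrank_eq, Module.finrank_pi_fintype]
  have hc := count (J := Fin (k ^ 2 - 1)) n
    (fun s => match s with | 0 => k ^ 2 - 1 | 1 => 1 | _ => 0) (fun s => rfl)
  have hs : (k ^ 2 - 1) * (n + 1) = (k ^ 2 - 1) + n * Fintype.card (Fin (k ^ 2 - 1)) * 1 := by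
    simp; ring
  rw [hs]
  refine (congrArg _ hc.symm).trans ?_
  rw [ ← Finset.sum_add_distrib, Finset.sum_congr rfl fun v _ => finrank_pow hk _]
  simp only [Finset.sum_const, Finset.card_univ, Fintype.card_pi, Fintype.card_sum, smul_eq_mul,
    Fintype.card_unit, Fintype.card_fin, Finset.prod_const]
  rw [show 1 + (k ^ 2 - 1) = k ^ 2 by omega, pow_mul, pow_succ _ n]

end DiffExp

/-- Let `F` be a field of characteristic zero and `k ≥ 2`.  The differential
PI-exponent of `M_k(F)` with respect to the Lie algebra of all its derivations equals `k²`: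
the `n`-th differential codimension equals `k^{2(n+1)} − (k² − 1)(n + 1)` for `n ≥ 1`, and the
limit of its `n`-th root as `n → ∞` exists and equals `k²`. -/
theorem differential_exponent_of_matrix_algebra
    (F : Type*) [Field F] [CharZero F] (k : ℕ) (hk : 2 ≤ k) :
    (∀ n : ℕ, 1 ≤ n → Module.finrank F (diffMultilinearSpan F k n)
      = k ^ (2 * (n + 1)) - (k ^ 2 - 1) * (n + 1)) ∧
    Filter.Tendsto
      (fun n : ℕ => (Module.finrank F (diffMultilinearSpan F k n) : ℝ) ^ ((n : ℝ)⁻¹))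
      Filter.atTop (nhds ((k : ℝ) ^ 2)) := by
  have hadd := fun n => DiffExp.codim_add (F := F) hk n
  refine ⟨fun n _ => Nat.eq_sub_of_add_eq (hadd n), ?_⟩
  have hk2 : 1 ≤ k ^ 2 := Nat.one_le_pow _ _ (by omega)
  have hkR : (0 : ℝ) < (k : ℝ) ^ 2 := by
    have : (0 : ℝ) < k := by exact_mod_cast (by omega : 0 < k)
    positivity
  have hlow : ∀ n, (k ^ 2) ^ n ≤ Module.finrank F (diffMultilinearSpan F k n) := by
    intro n
    have h1 : n + 1 ≤ (k ^ 2) ^ n := by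
      have h3 : 2 ^ n ≤ (k ^ 2) ^ n := Nat.pow_le_pow_left (by nlinarith) n
      have h4 : n < 2 ^ n := Nat.lt_two_pow_self
      omega
    have h2 := Nat.mul_le_mul_left (k ^ 2 - 1) h1
    have h3 : k ^ (2 * (n + 1)) = (k ^ 2 - 1) * (k ^ 2) ^ n + (k ^ 2) ^ n := by
      obtain ⟨d, hd⟩ := Nat.exists_eq_add_of_le hk2
      rw [pow_mul, hd, Nat.add_sub_cancel_left, pow_succ]
      ring
    have := hadd n
    omega
  have hupp : ∀ n, Module.finrank F (diffMultilinearSpan F k n) ≤ (k ^ 2) ^ (n + 1) := by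
    intro n
    have := hadd n
    rw [pow_mul] at this
    omega
  have lim : Filter.Tendsto (fun n : ℕ => (k : ℝ) ^ 2 * ((k : ℝ) ^ 2) ^ ((n : ℝ)⁻¹))
      Filter.atTop (nhds ((k : ℝ) ^ 2)) := by
    have h1 : Filter.Tendsto (fun n : ℕ => ((n : ℝ)⁻¹)) Filter.atTop (nhds 0) :=
      tendsto_inv_atTop_nhds_zero_nat
    have h2 := (Real.continuous_const_rpow hkR.ne').tendsto 0 |>.comp h1
    simpa using h2.const_mul ((k : ℝ) ^ 2)
  refine tendsto_of_tendsto_of_tendsto_of_le_of_le' tendsto_const_nhds lim ?_ ?_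
  · filter_upwards [Filter.eventually_ge_atTop 1] with n hn
    have h : (((k : ℝ) ^ 2) ^ n) ≤ (Module.finrank F (diffMultilinearSpan F k n) : ℝ) := by
      exact_mod_cast hlow n
    calc (k : ℝ) ^ 2 = (((k : ℝ) ^ 2) ^ n) ^ ((n : ℝ)⁻¹) :=
          (Real.pow_rpow_inv_natCast hkR.le (by omega)).symm
      _ ≤ _ := Real.rpow_le_rpow (by positivity) h (by positivity)
  · filter_upwards [Filter.eventually_ge_atTop 1] with n hn
    have h : (Module.finrank F (diffMultilinearSpan F k n) : ℝ) ≤ (((k : ℝ) ^ 2) ^ (n + 1)) := by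
      exact_mod_cast hupp n
    calc _ ≤ (((k : ℝ) ^ 2) ^ (n + 1)) ^ ((n : ℝ)⁻¹) :=
          Real.rpow_le_rpow (by positivity) h (by positivity)
      _ = _ := by
        rw [pow_succ, Real.mul_rpow (by positivity) (by positivity),
          Real.pow_rpow_inv_natCast hkR.le (by omega)]
end
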